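/- arXiv:1701.07101 — 2 statements merged into one kernel-verified Lean document; each statement's English description precedes it below -/
import Mathlib

section
/- Let ᵈ = ((d_1^-, d_1^+), …, (d_n^-, d_n^+)) be a digraphical directed degree sequence which is switch-irreducible, such that r_min ≥ 1 and 2 ≤ r_max ≤ (1/4)·√m. Then the mixing time τ(M(ᵈ), ε) of the directed switch chain M(ᵈ) on Ω(ᵈ) satisfies τ(M(ᵈ), ε) ≤ (1/4) · r_max^{16} · m^{11} · ( m·log(m) + log(ε^{-1}) ). -/
open scoped Classical

noncomputable section

namespace DirectedSwitchChain

variable {n : ℕ}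

/-- `Omega dm dp` is the set of simple directed graphs on `[n] = Fin n` (arc sets,
with no loops) in which vertex `j` has in-degree `dm j` and out-degree `dp j`. -/
def Omega (dm dp : Fin n → ℕ) : Set (Set (Fin n × Fin n)) :=
  {A | (∀ a ∈ A, a.1 ≠ a.2) ∧
       (∀ j, {w | (j, w) ∈ A}.ncard = dp j) ∧
       (∀ j, {w | (w, j) ∈ A}.ncard = dm j)}

/-- `m`: the number of arcs. -/
def numArcs (dm : Fin n → ℕ) : ℕ := ∑ j, dm j

/-- The maximum semi-degree. -/
def rmax (dm dp : Fin n → ℕ) : ℕ := Finset.univ.sup fun j => max (dm j) (dp j)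

/-- `A'` is obtained from `A` by a single directed switch. -/
def DSwitch (A A' : Set (Fin n × Fin n)) : Prop :=
  ∃ i j k l : Fin n,
    i ≠ j ∧ i ≠ k ∧ i ≠ l ∧ j ≠ k ∧ j ≠ l ∧ k ≠ l ∧
    (i, j) ∈ A ∧ (k, l) ∈ A ∧ (i, l) ∉ A ∧ (k, j) ∉ A ∧
    A' = (A \ {(i, j), (k, l)}) ∪ {(i, l), (k, j)}

/-- `(dm, dp)` is switch-irreducible: the directed switch chain is irreducible, i.e.
any element of `Omega dm dp` can be transformed into any other by a finite sequence
of switches. -/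
def SwitchIrreducible (dm dp : Fin n → ℕ) : Prop :=
  ∀ A ∈ Omega dm dp, ∀ A' ∈ Omega dm dp, Relation.ReflTransGen DSwitch A A'

/-- The number of unordered pairs of distinct arcs of `A`. -/
def arcPairCount (A : Set (Fin n × Fin n)) : ℕ :=
  {S : Set (Fin n × Fin n) | S ⊆ A ∧ S.ncard = 2}.ncard

/-- The number of unordered pairs `{(i,j), (k,l)}` of distinct arcs of `A` whose
switch is accepted and produces `A'`. -/
def dSwitchCount (A A' : Set (Fin n × Fin n)) : ℕ :=
  {S : Set (Fin n × Fin n) | ∃ i j k l : Fin n,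
    i ≠ j ∧ i ≠ k ∧ i ≠ l ∧ j ≠ k ∧ j ≠ l ∧ k ≠ l ∧
    S = {(i, j), (k, l)} ∧
    (i, j) ∈ A ∧ (k, l) ∈ A ∧ (i, l) ∉ A ∧ (k, j) ∉ A ∧
    A' = (A \ S) ∪ {(i, l), (k, j)}}.ncard

/-- The state space of the directed switch chain, as a type. -/
abbrev OmegaType (dm dp : Fin n → ℕ) : Type :=
  {A : Set (Fin n × Fin n) // A ∈ Omega dm dp}

instance (dm dp : Fin n → ℕ) : Fintype (OmegaType dm dp) := Fintype.ofFinite _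

/-- The transition matrix of the directed switch chain on `Omega dm dp`: from `A`,
choose uniformly at random an unordered pair of distinct arcs of `A`; if the four
endpoints are distinct and the switched arcs are absent, perform the switch, else
stay. -/
def transP (dm dp : Fin n → ℕ) :
    Matrix (OmegaType dm dp) (OmegaType dm dp) ℝ :=
  fun A A' =>
    if A = A' then
      1 - ∑ B : OmegaType dm dp,
        (if B = A then 0 else (dSwitchCount A.1 B.1 : ℝ) / (arcPairCount A.1))
    else (dSwitchCount A.1 A'.1 : ℝ) / (arcPairCount A.1)

/-- Total variation distance between two distributions on a finite set. -/
def dTV {Ω : Type*} [Fintype Ω] (σ σ' : Ω → ℝ) : ℝ := (1 / 2) * ∑ x, |σ x - σ' x|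

/-- The mixing time of a Markov chain with transition matrix `P` and stationary
distribution `π`. -/
def mixingTime {Ω : Type*} [Fintype Ω] (P : Matrix Ω Ω ℝ) (π : Ω → ℝ) (ε : ℝ) : ℕ :=
  Finset.univ.sup fun x : Ω =>
    sInf {T : ℕ | ∀ t, T ≤ t → dTV (fun y => (P ^ t) x y) π ≤ ε}

/-- The uniform distribution on the state space. -/
def uniformDist (dm dp : Fin n → ℕ) : OmegaType dm dp → ℝ :=
  fun _ => (Fintype.card (OmegaType dm dp) : ℝ)⁻¹

/-!
The chain is symmetric and holds with probability at least `1 / C(m, 2)`, because two arcs with a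
common tail or head are never switched. So it suffices to bound its spectral gap from below, that
is, to compare the variance of a function `f` on digraphs with its Dirichlet form for switches.

Lift `f` to pairings of out-points with in-points. All simple digraphs have the same number of
labellings, so nothing is lost by working with simple pairings, and these are perfect matchings of a
bipartite graph in which every possible arc contributes two nodes. Between two perfect matchings
there is a canonical path, treating the cycles of the symmetric difference one after the other and
passing through near-perfect matchings; the complementary matching encodes the end points, so that
few paths use a given slide. A near-perfect matching is a pairing with one defective arc. As `m` is
large compared with `r_max ^ 2`, the defect is repaired by an exchange with some other arc, and the
repairs of neighbouring near-perfect matchings are joined by a bounded number of exchanges through a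
generic arc. Finally, an exchange between simple pairings changes the digraph by at most one switch.
-/

/-! ### Exchanges and cycle minima -/

section Permutations

variable {α β : Type*}

/-- The bijection obtained from `φ` by exchanging the partners of `a` and `b`. -/
def exchange (φ : α ≃ β) (a b : α) : α ≃ β := (Equiv.swap a b).trans φ

@[simp] lemma exchange_left (φ : α ≃ β) (a b : α) : exchange φ a b a = φ b := by simp [exchange]

@[simp] lemma exchange_right (φ : α ≃ β) (a b : α) : exchange φ a b b = φ a := by simp [exchange]

lemma exchange_of_ne (φ : α ≃ β) {a b c : α} (hca : c ≠ a) (hcb : c ≠ b) :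
    exchange φ a b c = φ c := by
  simp [exchange, Equiv.swap_apply_of_ne_of_ne hca hcb]

@[simp] lemma exchange_self (φ : α ≃ β) (a : α) : exchange φ a a = φ := by simp [exchange]

lemma exchange_comm (φ : α ≃ β) (a b : α) : exchange φ a b = exchange φ b a := by
  rw [exchange, Equiv.swap_comm, exchange]

@[simp] lemma exchange_exchange (φ : α ≃ β) (a b : α) :
    exchange (exchange φ a b) a b = φ := by
  ext x
  simp [exchange]

lemma exchange_involutive (a b : α) :
    Function.Involutive fun φ : α ≃ β => exchange φ a b :=
  fun φ => exchange_exchange φ a b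

lemma exchange_exchange_eq (φ : α ≃ β) {l c a : α} (hcl : c ≠ l) (hac : a ≠ c)
    (hal : a ≠ l) : exchange (exchange φ l c) l a = exchange (exchange φ l a) a c := by
  ext x
  simp only [exchange, Equiv.trans_apply, Equiv.swap_apply_def]
  congr 1
  grind

lemma sameCycle_of_sameCycle_apply {τ ρ : Equiv.Perm α} (h : ∀ x, ρ.SameCycle x (τ x))
    {x y : α} (hxy : τ.SameCycle x y) : ρ.SameCycle x y := by
  obtain ⟨i, rfl⟩ := hxy
  induction i with
  | zero => exact .refl _ _
  | succ k ih =>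
    rw [add_comm, zpow_one_add, Equiv.Perm.mul_apply]
    exact ih.trans (h _)
  | pred k ih =>
    refine ih.trans ?_
    have hstep := h ((τ ^ (-(k : ℤ) - 1)) x)
    rw [← Equiv.Perm.mul_apply, ← zpow_one_add, add_sub_cancel] at hstep
    exact hstep.symm

lemma sameCycle_induction [Finite α] {τ : Equiv.Perm α} {p : α → Prop}
    (step : ∀ y, p y → p (τ y)) {x y : α} (hxy : τ.SameCycle x y) (hx : p x) : p y := by
  have iterate (k : ℕ) : p ((τ ^ k) x) := by
    induction k with
    | zero => exact hx
    | succ k ih =>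
      rw [pow_succ', Equiv.Perm.mul_apply]
      exact step _ ih
  obtain ⟨k, -, rfl⟩ := hxy.exists_pow_eq'
  exact iterate k

/-- The smallest rank occurring on the cycle of `τ` through `x`. -/
def cycleMin (rk : α → ℕ) (τ : Equiv.Perm α) (x : α) : ℕ := sInf (rk '' {y | τ.SameCycle x y})

lemma exists_eq_cycleMin (rk : α → ℕ) (τ : Equiv.Perm α) (x : α) :
    ∃ y, τ.SameCycle x y ∧ rk y = cycleMin rk τ x :=
  Nat.sInf_mem (s := rk '' {y | τ.SameCycle x y}) ⟨rk x, x, .refl _ _, rfl⟩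

lemma cycleMin_le (rk : α → ℕ) (τ : Equiv.Perm α) (x : α) : cycleMin rk τ x ≤ rk x :=
  Nat.sInf_le ⟨x, .refl _ _, rfl⟩

lemma cycleMin_congr (rk : α → ℕ) {τ ρ : Equiv.Perm α} {x y : α}
    (h : ∀ z, τ.SameCycle x z ↔ ρ.SameCycle y z) : cycleMin rk τ x = cycleMin rk ρ y := by
  simp only [cycleMin, h]

lemma cycleMin_eq_of_sameCycle (rk : α → ℕ) {τ : Equiv.Perm α} {x y : α} (h : τ.SameCycle x y) :
    cycleMin rk τ x = cycleMin rk τ y :=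
  cycleMin_congr rk fun _ => ⟨h.symm.trans, h.trans⟩

lemma cycleMin_apply (rk : α → ℕ) (τ : Equiv.Perm α) (x : α) :
    cycleMin rk τ (τ x) = cycleMin rk τ x :=
  cycleMin_eq_of_sameCycle rk (Equiv.Perm.sameCycle_apply_left.2 (.refl _ _))

lemma sameCycle_of_cycleMin_eq {rk : α → ℕ} (hrk : Function.Injective rk) {τ : Equiv.Perm α}
    {x l : α} (h : cycleMin rk τ x = rk l) : τ.SameCycle x l := by
  obtain ⟨y, hxy, hy⟩ := exists_eq_cycleMin rk τ x
  exact hrk (hy.trans h) ▸ hxy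

/-- The permutation `σ'⁻¹σ`, whose cycles are those of the symmetric difference of `σ` and `σ'`. -/
def transition (σ σ' : α ≃ β) : Equiv.Perm α := σ.trans σ'.symm

@[simp] lemma apply_transition (σ σ' : α ≃ β) (x : α) : σ' (transition σ σ' x) = σ x := by
  simp [transition]

lemma eq_transition {σ σ' : α ≃ β} {x y : α} (h : σ' y = σ x) : y = transition σ σ' x :=
  σ'.injective (h.trans (apply_transition σ σ' x).symm)

end Permutations

/-! ### Canonical paths between perfect matchings -/

section CanonicalPath

variable {L R : Type*}

/-- A perfect matching of the bipartite graph `adj`, as a bijection respecting `adj`. -/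
def IsPerfect (adj : L → R → Prop) (σ : L ≃ R) : Prop := ∀ x, adj x (σ x)

/-- A near-perfect matching with unmatched vertices `l` and `N l`: a bijection which respects
`adj` except possibly at `l`. -/
def IsNearPerfect (adj : L → R → Prop) (N : L ≃ R) (l : L) : Prop := ∀ x, x ≠ l → adj x (N x)

lemma IsNearPerfect.exchange {adj : L → R → Prop} {N : L ≃ R} {l x : L}
    (hN : IsNearPerfect adj N l) (hx : adj x (N l)) :
    IsNearPerfect adj (DirectedSwitchChain.exchange N l x) l := by
  intro y hy
  by_cases hyx : y = x
  · rwa [hyx, exchange_right]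
  · rw [exchange_of_ne N hy hyx]
    exact hN y hy

/-- `N` is an intermediate stage of transforming `σ` into `σ'`, the cycle of `σ'⁻¹σ` with
least-ranked element `l` being under treatment: cycles of smaller minimum already carry the
values of `σ'`, those of larger minimum still carry the values of `σ`, and on the current cycle
every element other than `l` carries one of the two values. The value `N l` is arbitrary, up to
belonging to the current cycle; it plays the role of the unmatched right vertex. -/
structure PathStage (rk : L → ℕ) (σ σ' N : L ≃ R) (l : L) : Prop where
  lt : ∀ x, cycleMin rk (transition σ σ') x < rk l → N x = σ' x
  gt : ∀ x, rk l < cycleMin rk (transition σ σ') x → N x = σ x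
  eq : ∀ x, x ≠ l → cycleMin rk (transition σ σ') x = rk l → N x = σ x ∨ N x = σ' x
  mark : ∀ x, σ' x = N l → cycleMin rk (transition σ σ') x = rk l

/-- The triple `(N, l, x)` stands for the exchange of the partners of `l` and `x` in `N`. It belongs
to the canonical path from `σ` to `σ'` if `N` is a stage with mark `l` and the exchange gives `x`
its final partner. -/
structure IsCanonicalSlide (rk : L → ℕ) (σ σ' : L ≃ R) (t : (L ≃ R) × L × L) : Prop where
  stage : PathStage rk σ σ' t.1 t.2.1
  target : σ' t.2.2 = t.1 t.2.1
  ne : t.2.2 ≠ t.2.1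

namespace PathStage

variable {rk : L → ℕ} {σ σ' N : L ≃ R} {l x : L}

lemma cycleMin_mark (hrk : Function.Injective rk) (h : PathStage rk σ σ' N l) :
    cycleMin rk (transition σ σ') l = rk l := by
  have hmin := h.mark (σ'.symm (N l)) (σ'.apply_symm_apply _)
  exact (cycleMin_eq_of_sameCycle rk (sameCycle_of_cycleMin_eq hrk hmin)).symm.trans hmin

lemma eq_or_eq (h : PathStage rk σ σ' N l) {y : L} (hy : y ≠ l) : N y = σ y ∨ N y = σ' y := by
  rcases lt_trichotomy (cycleMin rk (transition σ σ') y) (rk l) with hlt | heq | hgt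
  exacts [.inr (h.lt y hlt), h.eq y hy heq, .inl (h.gt y hgt)]

lemma isNearPerfect {adj : L → R → Prop} (hσ : IsPerfect adj σ) (hσ' : IsPerfect adj σ')
    (h : PathStage rk σ σ' N l) : IsNearPerfect adj N l := by
  intro y hy
  rcases h.eq_or_eq hy with hN | hN <;> rw [hN]
  exacts [hσ y, hσ' y]

lemma exchange_mark (hrk : Function.Injective rk) (h : PathStage rk σ σ' N l) (hx : σ' x = N l)
    (hne : x ≠ l) : PathStage rk σ σ' (exchange N l x) l := by
  have hl := h.cycleMin_mark hrk
  have hxmin := h.mark x hx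
  have hNx : N x = σ x :=
    (h.eq_or_eq hne).resolve_right fun hN => hne (N.injective (hN.trans hx))
  have unchanged {y : L} (hy : cycleMin rk (transition σ σ') y ≠ rk l) :
      exchange N l x y = N y :=
    exchange_of_ne N (by rintro rfl; exact hy hl) (by rintro rfl; exact hy hxmin)
  refine ⟨fun y hy => ?_, fun y hy => ?_, fun y hyl hy => ?_, fun y hy => ?_⟩
  · rw [unchanged hy.ne, h.lt y hy]
  · rw [unchanged hy.ne', h.gt y hy]
  · by_cases hyx : y = x
    · exact .inr (by rw [hyx, exchange_right, hx])
    · rw [exchange_of_ne N hyl hyx]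
      exact h.eq y hyl hy
  · rw [exchange_left, hNx] at hy
    rw [eq_transition hy, cycleMin_apply, hxmin]

lemma eq_of_closed [Finite L] (hrk : Function.Injective rk) (h : PathStage rk σ σ' N l)
    (hclosed : N l = σ' l) {y : L} (hy : cycleMin rk (transition σ σ') y ≤ rk l) :
    N y = σ' y := by
  rcases hy.lt_or_eq with hlt | heq
  · exact h.lt y hlt
  by_contra hne
  refine sameCycle_induction (p := fun z => N z ≠ σ' z) (fun z hz hτz => hz ?_)
    (sameCycle_of_cycleMin_eq hrk heq) hne hclosed
  have hzl : z ≠ l := by rintro rfl; exact hz hclosed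
  have hNz : N z = σ z := (h.eq_or_eq hzl).resolve_right hz
  rw [apply_transition, ← hNz] at hτz
  have hfix := apply_transition σ σ' z
  rw [N.injective hτz] at hfix
  exact hNz.trans hfix.symm

end PathStage

variable {rk : L → ℕ} {σ σ' N : L ≃ R} {l x : L}

lemma exists_pathStage {k : ℕ}
    (hlt : ∀ x, cycleMin rk (transition σ σ') x < k → N x = σ' x)
    (hge : ∀ x, k ≤ cycleMin rk (transition σ σ') x → N x = σ x) (hne : N ≠ σ') :
    ∃ l, PathStage rk σ σ' N l ∧ N l ≠ σ' l := by
  set μ := cycleMin rk (transition σ σ') with hμ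
  obtain ⟨y, hy, hmin⟩ := WellFounded.has_min (InvImage.wf μ Nat.lt_wfRel.wf) {x | N x ≠ σ' x}
    (by simpa [Set.Nonempty, Equiv.ext_iff] using hne)
  have hsmall (x : L) (hx : μ x < μ y) : N x = σ' x := by
    by_contra hx'
    exact hmin x hx' hx
  have hky : k ≤ μ y := not_lt.1 fun h => hy (hlt y h)
  obtain ⟨l, hyl, hrl⟩ := exists_eq_cycleMin rk (transition σ σ') y
  rw [← hμ] at hrl
  have hμl : μ l = μ y := (cycleMin_eq_of_sameCycle rk hyl).symm
  have hNl : N l = σ l := hge l (hky.trans_eq hμl.symm)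
  refine ⟨l, ⟨fun x hx => hsmall x (hrl ▸ hx), fun x hx => hge x (by lia),
    fun x _ hx => .inl (hge x (by lia)), fun x hx => ?_⟩, fun hcon => hy ?_⟩
  · rw [eq_transition (hx.trans hNl), cycleMin_apply, ← hμ, hμl, hrl]
  · have hfix : transition σ σ' l = l := (eq_transition (hcon.symm.trans hNl)).symm
    obtain ⟨i, rfl⟩ := hyl.symm
    rwa [Equiv.Perm.zpow_apply_eq_self_of_apply_eq_self hfix]

lemma IsCanonicalSlide.exchange_eq_or_exists_pathStage [Finite L] (hrk : Function.Injective rk)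
    (h : IsCanonicalSlide rk σ σ' (N, l, x)) :
    exchange N l x = σ' ∨ ∃ l', PathStage rk σ σ' (exchange N l x) l' ∧
      exchange N l x l' ≠ σ' l' ∧
      (l' = l ∨ ∀ y, exchange N l x y = σ y ∨ exchange N l x y = σ' y) := by
  have hstage := h.stage.exchange_mark hrk h.target h.ne
  by_cases hclosed : exchange N l x l = σ' l
  · by_cases hfin : exchange N l x = σ'
    · exact .inl hfin
    obtain ⟨l', hl', hne⟩ := exists_pathStage (k := rk l + 1)
      (fun y hy => hstage.eq_of_closed hrk hclosed (Nat.lt_succ_iff.1 hy)) hstage.gt hfin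
    refine .inr ⟨l', hl', hne, .inr fun y => ?_⟩
    by_cases hy : y = l
    · exact .inr (hy ▸ hclosed)
    · exact hstage.eq_or_eq hy
  · exact .inr ⟨l, hstage, hclosed, .inl rfl⟩

lemma IsCanonicalSlide.ne_of_exchange_ne (h : IsCanonicalSlide rk σ σ' (N, l, x)) {y : L}
    (hy : exchange N l x y ≠ σ' y) : N y ≠ σ' y := by
  by_cases hyl : y = l
  · rw [hyl, ← h.target]
    exact σ'.injective.ne h.ne
  by_cases hyx : y = x
  · rw [hyx, exchange_right] at hy
    exact absurd h.target.symm hy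
  · rwa [exchange_of_ne N hyl hyx] at hy

/-- The increment of `F` along the slide `(N, l, x)`, which keeps the mark `l`. -/
def slideIncrement (F : (L ≃ R) → L → ℝ) (t : (L ≃ R) × L × L) : ℝ :=
  F (exchange t.1 t.2.1 t.2.2) t.2.1 - F t.1 t.2.1

/-- `P` is a set of canonical slides from `σ` to `σ'`, moving pairwise different vertices at which
`N` still disagrees with `σ'`, along which the increments of `F` sum up to `d`. -/
structure IsTelescoping (rk : L → ℕ) (σ σ' : L ≃ R) (F : (L ≃ R) → L → ℝ) (N : L ≃ R) (d : ℝ)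
    (P : Finset ((L ≃ R) × L × L)) : Prop where
  slide : ∀ t ∈ P, IsCanonicalSlide rk σ σ' t
  ne : ∀ t ∈ P, N t.2.2 ≠ σ' t.2.2
  injOn : Set.InjOn (fun t : (L ≃ R) × L × L => t.2.2) P
  sum : ∑ t ∈ P, slideIncrement F t = d

lemma IsTelescoping.cons {F : (L ≃ R) → L → ℝ} {d : ℝ} {P : Finset ((L ≃ R) × L × L)}
    (h : IsCanonicalSlide rk σ σ' (N, l, x)) (hP : IsTelescoping rk σ σ' F (exchange N l x) d P) :
    IsTelescoping rk σ σ' F N (slideIncrement F (N, l, x) + d) (insert (N, l, x) P) := by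
  have hx (t) (ht : t ∈ P) : t.2.2 ≠ x := by
    intro htx
    have hne := hP.ne t ht
    rw [htx, exchange_right] at hne
    exact hne h.target.symm
  have hnotMem : (N, l, x) ∉ P := fun ht => hx _ ht rfl
  refine ⟨?_, ?_, ?_, by rw [Finset.sum_insert hnotMem, hP.sum]⟩
  · exact Finset.forall_mem_insert _ _ _ |>.2 ⟨h, hP.slide⟩
  · refine Finset.forall_mem_insert _ _ _ |>.2
      ⟨fun hNx => h.ne (N.injective (hNx.trans h.target)), fun t ht => ?_⟩
    exact h.ne_of_exchange_ne (hP.ne t ht)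
  · rw [Finset.coe_insert, Set.injOn_insert (by simpa using hnotMem)]
    exact ⟨hP.injOn, by rintro ⟨t, ht, htx⟩; exact hx t ht htx⟩

lemma PathStage.exists_isTelescoping [Finite L] (hrk : Function.Injective rk)
    {adj : L → R → Prop} {F : (L ≃ R) → L → ℝ} {ft : (L ≃ R) → ℝ}
    (hF : ∀ σ, IsPerfect adj σ → ∀ l, F σ l = ft σ) (hσ : IsPerfect adj σ)
    (hσ' : IsPerfect adj σ') (h : PathStage rk σ σ' N l) (hl : N l ≠ σ' l) :
    ∃ P, IsTelescoping rk σ σ' F N (ft σ' - F N l) P := by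
  induction hs : {x | N x ≠ σ' x} using WellFoundedLT.induction generalizing N l with
  | ind s ih =>
  subst hs
  obtain ⟨x, hx⟩ := σ'.surjective (N l)
  have hslide : IsCanonicalSlide rk σ σ' (N, l, x) :=
    ⟨h, hx, fun hxl => hl (hx.symm.trans (congrArg σ' hxl))⟩
  have hdecrease : {y | exchange N l x y ≠ σ' y} < {y | N y ≠ σ' y} := by
    refine Set.ssubset_iff_of_subset (fun y => hslide.ne_of_exchange_ne) |>.2
      ⟨x, fun hNx => hslide.ne (N.injective (hNx.trans hx)), fun hne => hne ?_⟩
    rw [exchange_right, hx]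
  suffices ∃ P, IsTelescoping rk σ σ' F (exchange N l x) (ft σ' - F (exchange N l x) l) P by
    obtain ⟨P, hP⟩ := this
    have htotal : slideIncrement F (N, l, x) + (ft σ' - F (exchange N l x) l) = ft σ' - F N l := by
      simp only [slideIncrement]
      ring
    exact ⟨_, htotal ▸ hP.cons hslide⟩
  rcases hslide.exchange_eq_or_exists_pathStage hrk with hfin | ⟨l', hstage, hne, hmark⟩
  · refine ⟨∅, by simp, by simp, by simp, ?_⟩
    rw [hfin, hF σ' hσ', Finset.sum_empty, sub_self]
  · have hmark : F (exchange N l x) l' = F (exchange N l x) l := by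
      rcases hmark with rfl | hpair
      · rfl
      have hperf : IsPerfect adj (exchange N l x) := fun y => by
        rcases hpair y with hy | hy <;> rw [hy]
        exacts [hσ y, hσ' y]
      rw [hF _ hperf, hF _ hperf]
    exact hmark ▸ ih _ hdecrease hstage hne rfl

end CanonicalPath

/-! ### The Poincaré inequality for perfect matchings -/

section Encoding

variable {L R : Type*}

section Pairs

variable {σ σ' ρ ρ' : L ≃ R}

lemma sameCycle_of_pair_eq (hpair : ∀ x, s(σ x, σ' x) = s(ρ x, ρ' x)) {x y : L}
    (hxy : (transition σ σ').SameCycle x y) : (transition ρ ρ').SameCycle x y := by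
  refine sameCycle_of_sameCycle_apply (fun x => ?_) hxy
  obtain ⟨y, hy⟩ : ∃ y, y = transition σ σ' x := ⟨_, rfl⟩
  have hσ : σ' y = σ x := hy ▸ apply_transition σ σ' x
  rw [← hy]
  rcases Sym2.eq_iff.1 (hpair x) with ⟨hx, -⟩ | ⟨hx, -⟩ <;>
    rcases Sym2.eq_iff.1 (hpair y) with ⟨-, hy'⟩ | ⟨-, hy'⟩
  · rw [eq_transition (hy'.symm.trans (hσ.trans hx))]
    exact Equiv.Perm.sameCycle_apply_right.2 (.refl _ _)
  · rw [ρ.injective (hy'.symm.trans (hσ.trans hx))]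
  · rw [ρ'.injective (hy'.symm.trans (hσ.trans hx))]
  · rw [eq_transition (hx.symm.trans (hσ.symm.trans hy'))]
    exact Equiv.Perm.sameCycle_apply_left.2 (.refl _ _)

lemma agree_transition (hpair : ∀ x, s(σ x, σ' x) = s(ρ x, ρ' x)) {x : L}
    (hx : σ x = ρ x ∧ σ' x = ρ' x) :
    σ (transition σ σ' x) = ρ (transition σ σ' x) ∧
      σ' (transition σ σ' x) = ρ' (transition σ σ' x) := by
  rcases Sym2.eq_iff.1 (hpair (transition σ σ' x)) with h | ⟨-, h⟩
  · exact h
  · have hfix : transition σ σ' x = x :=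
      ρ.injective (h.symm.trans ((apply_transition σ σ' x).trans hx.1))
    rwa [hfix]

end Pairs

/-- The encoding of the pair `(σ, σ')` relative to a canonical slide `(N, l, x)`: a near-perfect
matching with mark `x` which, away from `l` and `x`, makes the choice between `σ` and `σ'`
complementary to that of `N`. -/
def encoding (σ σ' N : L ≃ R) (l x : L) : L ≃ R := (exchange σ' l x).trans (N.symm.trans σ)

namespace IsCanonicalSlide

variable {rk : L → ℕ} {σ σ' ρ ρ' N : L ≃ R} {l x y : L}

lemma encoding_mark (h : IsCanonicalSlide rk σ σ' (N, l, x)) : encoding σ σ' N l x l = σ l := by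
  have hx : σ' x = N l := h.target
  simp [encoding, hx]

lemma apply_symm_of_ne (h : IsCanonicalSlide rk σ σ' (N, l, x)) (hyx : y ≠ x) (hy : N y ≠ σ' y) :
    σ (N.symm (σ' y)) = σ' y := by
  obtain ⟨z, hz⟩ := N.surjective (σ' y)
  have hzl : z ≠ l := by
    rintro rfl
    exact hyx (σ'.injective (hz.symm.trans h.target.symm))
  rw [← hz, N.symm_apply_apply]
  refine (h.stage.eq_or_eq hzl).elim Eq.symm fun hNz => absurd hz ?_
  rwa [σ'.injective (hNz.symm.trans hz)]

lemma encoding_moved (h : IsCanonicalSlide rk σ σ' (N, l, x)) : encoding σ σ' N l x x = σ' l := by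
  have hl : N l ≠ σ' l := fun hl => h.ne (σ'.injective (h.target.trans hl))
  simpa [encoding] using h.apply_symm_of_ne h.ne.symm hl

lemma pair_encoding (h : IsCanonicalSlide rk σ σ' (N, l, x)) (hyl : y ≠ l) (hyx : y ≠ x) :
    s(N y, encoding σ σ' N l x y) = s(σ y, σ' y) := by
  have henc : encoding σ σ' N l x y = σ (N.symm (σ' y)) := by
    simp [encoding, exchange_of_ne σ' hyl hyx]
  rw [henc]
  by_cases hy : N y = σ' y
  · rw [← hy, N.symm_apply_apply, Sym2.eq_swap]
  · rw [(h.stage.eq_or_eq hyl).resolve_right hy, h.apply_symm_of_ne hyx hy]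

lemma pair_eq (h : IsCanonicalSlide rk σ σ' (N, l, x)) (y : L) :
    s(σ y, σ' y) =
      if y = l then s(encoding σ σ' N l x l, encoding σ σ' N l x x)
      else if y = x then s(N x, N l) else s(N y, encoding σ σ' N l x y) := by
  split_ifs with hyl hyx
  · rw [hyl, h.encoding_mark, h.encoding_moved]
  · have hx : N x ≠ σ' x := fun hx => h.ne (N.injective (hx.trans h.target))
    rw [hyx, (h.stage.eq_or_eq h.ne).resolve_right hx, h.target]
  · exact (h.pair_encoding hyl hyx).symm

lemma isNearPerfect_encoding {adj : L → R → Prop} (hσ : IsPerfect adj σ) (hσ' : IsPerfect adj σ')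
    (h : IsCanonicalSlide rk σ σ' (N, l, x)) : IsNearPerfect adj (encoding σ σ' N l x) x := by
  intro y hyx
  by_cases hyl : y = l
  · rw [hyl, h.encoding_mark]
    exact hσ l
  · rcases Sym2.eq_iff.1 (h.pair_encoding hyl hyx) with ⟨-, hy⟩ | ⟨-, hy⟩ <;> rw [hy]
    exacts [hσ' y, hσ y]

lemma eq_and_eq_of_encoding_eq [Finite L] (hrk : Function.Injective rk)
    (h : IsCanonicalSlide rk σ σ' (N, l, x)) (h' : IsCanonicalSlide rk ρ ρ' (N, l, x))
    (henc : encoding σ σ' N l x = encoding ρ ρ' N l x) : σ = ρ ∧ σ' = ρ' := by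
  have hpair (y : L) : s(σ y, σ' y) = s(ρ y, ρ' y) := by rw [h.pair_eq, h'.pair_eq, henc]
  have hmin (y : L) :
      cycleMin rk (transition ρ ρ') y = cycleMin rk (transition σ σ') y :=
    cycleMin_congr rk fun _ =>
      ⟨sameCycle_of_pair_eq fun z => (hpair z).symm, sameCycle_of_pair_eq hpair⟩
  have hmark : σ l = ρ l ∧ σ' l = ρ' l := by
    rw [← h.encoding_mark, ← h.encoding_moved, henc, h'.encoding_mark, h'.encoding_moved]
    exact ⟨rfl, rfl⟩
  have hagree (y : L) : σ y = ρ y ∧ σ' y = ρ' y := by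
    rcases lt_trichotomy (cycleMin rk (transition σ σ') y) (rk l) with hlt | heq | hgt
    · have hy : σ' y = ρ' y := (h.stage.lt y hlt).symm.trans (h'.stage.lt y (hmin y ▸ hlt))
      exact ⟨Sym2.congr_left.1 (hy ▸ hpair y), hy⟩
    · exact sameCycle_induction (p := fun y => σ y = ρ y ∧ σ' y = ρ' y)
        (fun _ => agree_transition hpair) (sameCycle_of_cycleMin_eq hrk heq).symm hmark
    · have hy : σ y = ρ y := (h.stage.gt y hgt).symm.trans (h'.stage.gt y (hmin y ▸ hgt))
      exact ⟨hy, Sym2.congr_right.1 (hy ▸ hpair y)⟩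
  exact ⟨Equiv.ext fun y => (hagree y).1, Equiv.ext fun y => (hagree y).2⟩

end IsCanonicalSlide

/-- `(N, l, x)` is a slide between near-perfect matchings of `adj` with mark `l ∈ O`, moving the
vertex `x ∈ O`. -/
structure IsSlide (adj : L → R → Prop) (O : Finset L) (t : (L ≃ R) × L × L) : Prop where
  isNearPerfect : IsNearPerfect adj t.1 t.2.1
  mark_mem : t.2.1 ∈ O
  moved_mem : t.2.2 ∈ O
  ne : t.2.2 ≠ t.2.1
  adj : adj t.2.2 (t.1 t.2.1)

lemma IsCanonicalSlide.isSlide {rk : L → ℕ} {adj : L → R → Prop} {O : Finset L}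
    (hO : ∀ x ∈ O, ∀ y ∉ O, rk x < rk y) {σ σ' : L ≃ R} {t : (L ≃ R) × L × L}
    (hσ : IsPerfect adj σ) (hσ' : IsPerfect adj σ') (h : IsCanonicalSlide rk σ σ' t)
    (ht : t.2.2 ∈ O) : IsSlide adj O t := by
  refine ⟨h.stage.isNearPerfect hσ hσ', not_not.1 fun hl => ?_, ht, h.ne, h.target ▸ hσ' _⟩
  have hmin := cycleMin_le rk (transition σ σ') t.2.2
  rw [h.stage.mark _ h.target] at hmin
  exact (hO _ ht _ hl).not_ge hmin

lemma card_canonicalSlide_le [Finite L] [Fintype (L ≃ R)] {rk : L → ℕ} {adj : L → R → Prop}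
    (hrk : Function.Injective rk) (t : (L ≃ R) × L × L) :
    (Finset.univ.filter fun p : (L ≃ R) × (L ≃ R) =>
        (IsPerfect adj p.1 ∧ IsPerfect adj p.2) ∧ IsCanonicalSlide rk p.1 p.2 t).card ≤
      (Finset.univ.filter fun N : L ≃ R => IsNearPerfect adj N t.2.2).card := by
  refine Finset.card_le_card_of_injOn (fun p => encoding p.1 p.2 t.1 t.2.1 t.2.2) ?_ ?_
  · intro p hp
    obtain ⟨⟨hσ, hσ'⟩, hslide⟩ := (Finset.mem_filter_univ _).1 hp
    exact (Finset.mem_filter_univ _).2 (hslide.isNearPerfect_encoding hσ hσ')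
  · intro p hp q hq henc
    exact Prod.ext_iff.2 <| ((Finset.mem_filter_univ _).1 hp).2.eq_and_eq_of_encoding_eq hrk
      ((Finset.mem_filter_univ _).1 hq).2 henc

variable [Fintype L] [Fintype (L ≃ R)] {rk : L → ℕ} {adj : L → R → Prop} {O : Finset L}
  {F : (L ≃ R) → L → ℝ} {ft : (L ≃ R) → ℝ}

lemma sq_sub_le_sum_canonicalSlide (hrk : Function.Injective rk)
    (hO : ∀ x ∈ O, ∀ y ∉ O, rk x < rk y) (hF : ∀ σ, IsPerfect adj σ → ∀ l, F σ l = ft σ)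
    (hinv : ∀ N l x, x ∉ O → x ≠ l → IsNearPerfect adj N l → adj x (N l) →
      F (exchange N l x) l = F N l)
    {σ σ' : L ≃ R} (hσ : IsPerfect adj σ) (hσ' : IsPerfect adj σ') :
    (ft σ - ft σ') ^ 2 ≤
      O.card * ∑ t with IsSlide adj O t ∧ IsCanonicalSlide rk σ σ' t, slideIncrement F t ^ 2 := by
  by_cases hne : σ = σ'
  · rw [hne, sub_self, zero_pow two_ne_zero]
    positivity
  obtain ⟨l, hl, hl'⟩ := exists_pathStage (rk := rk) (σ := σ) (N := σ) (k := 0)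
    (fun _ h => absurd h (Nat.not_lt_zero _)) (fun _ _ => rfl) hne
  obtain ⟨P, hP⟩ := hl.exists_isTelescoping hrk hF hσ hσ' hl'
  have hsum : ∑ t ∈ P with t.2.2 ∈ O, slideIncrement F t = ft σ' - ft σ := by
    rw [← hF σ hσ l, ← hP.sum]
    refine Finset.sum_filter_of_ne fun t ht hinc => not_not.1 fun hmem => hinc ?_
    have hslide := hP.slide t ht
    exact sub_eq_zero.2 <| hinv _ _ _ hmem hslide.ne (hslide.stage.isNearPerfect hσ hσ')
      (hslide.target ▸ hσ' _)
  have hcard : (P.filter fun t => t.2.2 ∈ O).card ≤ O.card :=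
    Finset.card_le_card_of_injOn (fun t => t.2.2) (fun t ht => (Finset.mem_filter.1 ht).2)
      (hP.injOn.mono fun t ht => (Finset.mem_filter.1 ht).1)
  have hsub : (P.filter fun t => t.2.2 ∈ O) ⊆
      Finset.univ.filter fun t => IsSlide adj O t ∧ IsCanonicalSlide rk σ σ' t := fun t ht => by
    obtain ⟨ht, hmem⟩ := Finset.mem_filter.1 ht
    exact Finset.mem_filter_univ _ |>.2 ⟨(hP.slide t ht).isSlide hO hσ hσ' hmem, hP.slide t ht⟩
  rw [sub_sq_comm, ← hsum]
  exact sq_sum_le_card_mul_sum_sq.trans (by gcongr)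

/-- Only the vertices of `O` have to be moved at a cost; they are ranked first, so that the mark of
a canonical path is in `O` whenever a vertex of `O` is moved. -/
theorem matching_poincare (hrk : Function.Injective rk) (hO : ∀ x ∈ O, ∀ y ∉ O, rk x < rk y)
    (hF : ∀ σ, IsPerfect adj σ → ∀ l, F σ l = ft σ)
    (hinv : ∀ N l x, x ∉ O → x ≠ l → IsNearPerfect adj N l → adj x (N l) →
      F (exchange N l x) l = F N l)
    {C : ℝ} (hC : ∀ x ∈ O, ((Finset.univ.filter fun N => IsNearPerfect adj N x).card : ℝ) ≤ C) :
    ∑ σ with IsPerfect adj σ, ∑ σ' with IsPerfect adj σ', (ft σ - ft σ') ^ 2 ≤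
      O.card * C * ∑ t with IsSlide adj O t, slideIncrement F t ^ 2 := by
  calc ∑ σ with IsPerfect adj σ, ∑ σ' with IsPerfect adj σ', (ft σ - ft σ') ^ 2
      ≤ ∑ σ with IsPerfect adj σ, ∑ σ' with IsPerfect adj σ',
          O.card * ∑ t with IsSlide adj O t ∧ IsCanonicalSlide rk σ σ' t, slideIncrement F t ^ 2 :=
        Finset.sum_le_sum fun σ hσ => Finset.sum_le_sum fun σ' hσ' =>
          sq_sub_le_sum_canonicalSlide hrk hO hF hinv ((Finset.mem_filter_univ _).1 hσ)
            ((Finset.mem_filter_univ _).1 hσ')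
    _ = O.card * ∑ t with IsSlide adj O t,
          ∑ p : (L ≃ R) × (L ≃ R) with
            (IsPerfect adj p.1 ∧ IsPerfect adj p.2) ∧ IsCanonicalSlide rk p.1 p.2 t,
              slideIncrement F t ^ 2 := by
        simp_rw [← Finset.mul_sum]
        rw [← Finset.sum_product']
        congr 1
        refine Finset.sum_comm' fun p t => ?_
        simp only [Finset.mem_product, Finset.mem_filter_univ]
        tauto
    _ ≤ O.card * ∑ t with IsSlide adj O t, C * slideIncrement F t ^ 2 := by
        gcongr with t ht
        rw [Finset.sum_const, nsmul_eq_mul]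
        gcongr
        exact (Nat.cast_le.2 (card_canonicalSlide_le hrk t)).trans
          (hC _ ((Finset.mem_filter_univ _).1 ht).moved_mem)
    _ = O.card * C * ∑ t with IsSlide adj O t, slideIncrement F t ^ 2 := by
        rw [← Finset.mul_sum, mul_assoc]

end Encoding

/-! ### Pairings of points -/

section Pairings

/-- The points of the configuration model: the vertex `v` carries `d v` of them. A bijection from
`Points dp` to `Points dm` pairs out-points with in-points. -/
abbrev Points (d : Fin n → ℕ) : Type := Σ v : Fin n, Fin (d v)

variable {dm dp : Fin n → ℕ}

/-- The arc formed by the out-point `a` and its partner under the pairing `φ`. -/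
def arc (φ : Points dp ≃ Points dm) (a : Points dp) : Fin n × Fin n := (a.1, (φ a).1)

/-- The arc set of the pairing `φ`. -/
def arcs (φ : Points dp ≃ Points dm) : Set (Fin n × Fin n) := Set.range (arc φ)

/-- The arc set of the pairing `φ` without the arcs of the out-points in `S`. -/
def arcsOff (φ : Points dp ≃ Points dm) (S : Set (Points dp)) : Set (Fin n × Fin n) :=
  arc φ '' Sᶜ

/-- The pairing `φ` projects to a simple digraph. -/
def IsSimple (φ : Points dp ≃ Points dm) : Prop :=
  (∀ a, a.1 ≠ (φ a).1) ∧ Function.Injective (arc φ)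

/-- The pairing `φ` projects to a simple digraph once the pairs of the out-points in `S` are
removed. -/
def IsSimpleOff (φ : Points dp ≃ Points dm) (S : Set (Points dp)) : Prop :=
  (∀ a ∉ S, a.1 ≠ (φ a).1) ∧ Set.InjOn (arc φ) Sᶜ

variable {φ : Points dp ≃ Points dm} {S S' : Set (Points dp)} {a b c l : Points dp} {v : Fin n}

lemma arc_mem_arcsOff (ha : a ∉ S) : arc φ a ∈ arcsOff φ S := ⟨a, ha, rfl⟩

lemma arcsOff_anti (h : S ⊆ S') : arcsOff φ S' ⊆ arcsOff φ S :=
  Set.image_mono (Set.compl_subset_compl.2 h)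

lemma arcsOff_empty : arcsOff φ ∅ = arcs φ := by
  rw [arcsOff, arcs, Set.compl_empty, Set.image_univ]

lemma arcsOff_eq_insert (ha : a ∉ S) :
    arcsOff φ S = insert (arc φ a) (arcsOff φ (insert a S)) := by
  rw [arcsOff, arcsOff, ← Set.image_insert_eq]
  congr 1
  ext x
  by_cases hx : x = a <;> simp [hx, ha]

lemma arcs_eq_insert (a : Points dp) : arcs φ = insert (arc φ a) (arcsOff φ {a}) := by
  rw [← arcsOff_empty, arcsOff_eq_insert (Set.notMem_empty a), insert_empty_eq]

lemma arc_exchange_left (φ : Points dp ≃ Points dm) (a b : Points dp) :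
    arc (exchange φ a b) a = (a.1, (φ b).1) := by simp [arc]

lemma arc_exchange_right (φ : Points dp ≃ Points dm) (a b : Points dp) :
    arc (exchange φ a b) b = (b.1, (φ a).1) := by simp [arc]

lemma arc_exchange_of_ne (hca : c ≠ a) (hcb : c ≠ b) : arc (exchange φ a b) c = arc φ c := by
  simp [arc, exchange_of_ne φ hca hcb]

lemma arcsOff_exchange_pair : arcsOff (exchange φ a b) {a, b} = arcsOff φ {a, b} :=
  Set.image_congr fun c hc => by
    obtain ⟨hca, hcb⟩ := not_or.1 hc
    exact arc_exchange_of_ne hca hcb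

lemma arcs_exchange :
    arcs (exchange φ a b) = {(a.1, (φ b).1), (b.1, (φ a).1)} ∪ arcsOff φ {a, b} := by
  by_cases hab : b = a
  · rw [hab, exchange_self, Set.pair_eq_singleton, Set.pair_eq_singleton, Set.singleton_union,
      arcs_eq_insert a, arc]
  · rw [arcs_eq_insert a, arcsOff_eq_insert (a := b) hab, Set.pair_comm b a, arcsOff_exchange_pair,
      arc_exchange_left, arc_exchange_right]
    simp only [Set.insert_union, Set.singleton_union]

lemma arcsOff_exchange_subset :
    arcsOff (exchange φ l c) {l} ⊆ insert (c.1, (φ l).1) (arcsOff φ {l}) := by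
  rintro _ ⟨d, hd, rfl⟩
  by_cases hdc : d = c
  · subst hdc
    exact .inl (arc_exchange_right φ l d)
  · rw [arc_exchange_of_ne hd hdc]
    exact .inr (arc_mem_arcsOff hd)

lemma IsSimple.isSimpleOff (h : IsSimple φ) (S : Set (Points dp)) : IsSimpleOff φ S :=
  ⟨fun a _ => h.1 a, h.2.injOn⟩

lemma IsSimpleOff.mono (h : IsSimpleOff φ S) (hS : S ⊆ S') : IsSimpleOff φ S' :=
  ⟨fun a ha => h.1 a fun haS => ha (hS haS), h.2.mono (Set.compl_subset_compl.2 hS)⟩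

lemma IsSimpleOff.of_insert (h : IsSimpleOff φ (insert a S)) (ha : a.1 ≠ (φ a).1)
    (hnew : arc φ a ∉ arcsOff φ (insert a S)) : IsSimpleOff φ S := by
  have hS : ∀ {b}, b ∉ S → b ≠ a → b ∉ insert a S := fun hb hba => not_or.2 ⟨hba, hb⟩
  refine ⟨fun b hb => ?_, fun b hb c hc hbc => ?_⟩
  · by_cases hba : b = a
    · exact hba ▸ ha
    · exact h.1 b (hS hb hba)
  · by_cases hba : b = a <;> by_cases hca : c = a
    · exact hba.trans hca.symm
    · rw [hba] at hbc
      exact absurd (hbc ▸ arc_mem_arcsOff (hS hc hca)) hnew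
    · rw [hca] at hbc
      exact absurd (hbc ▸ arc_mem_arcsOff (hS hb hba)) hnew
    · exact h.2 (hS hb hba) (hS hc hca) hbc

lemma IsSimpleOff.isSimple (h : IsSimpleOff φ {a}) (ha : a.1 ≠ (φ a).1)
    (hnew : arc φ a ∉ arcsOff φ {a}) : IsSimple φ := by
  rw [← insert_empty_eq] at h hnew
  obtain ⟨hloop, hinj⟩ := h.of_insert ha hnew
  exact ⟨fun b => hloop b (Set.notMem_empty b),
    Set.injOn_univ.1 (Set.compl_empty ▸ hinj)⟩

lemma IsSimpleOff.isSimple_exchange (h : IsSimpleOff φ {a, b}) (ha : a.1 ≠ (φ b).1)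
    (hb : b.1 ≠ (φ a).1) (hab : (a.1, (φ b).1) ≠ (b.1, (φ a).1))
    (ha' : (a.1, (φ b).1) ∉ arcsOff φ {a, b}) (hb' : (b.1, (φ a).1) ∉ arcsOff φ {a, b}) :
    IsSimple (exchange φ a b) := by
  have hoff : IsSimpleOff (exchange φ a b) {b, a} := by
    rw [Set.pair_comm]
    refine ⟨fun c hc => ?_, h.2.congr fun c hc => ?_⟩
    · obtain ⟨hca, hcb⟩ := not_or.1 hc
      exact exchange_of_ne φ hca hcb ▸ h.1 c hc
    · obtain ⟨hca, hcb⟩ := not_or.1 hc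
      exact (arc_exchange_of_ne hca hcb).symm
  have hne : b ≠ a := by
    rintro rfl
    exact hab rfl
  refine (hoff.of_insert (by rwa [exchange_right]) ?_).isSimple (by rwa [exchange_left]) ?_
  · rwa [arc_exchange_right, Set.pair_comm, arcsOff_exchange_pair]
  · rw [arcsOff_eq_insert (S := {a}) hne, arc_exchange_left, arc_exchange_right, Set.pair_comm,
      arcsOff_exchange_pair]
    exact not_or.2 ⟨hab, ha'⟩

/-! ### Generic out-points -/

/-- The head of `a` can be attached to the tail of `l`: this creates neither a loop nor a repeated
arc. -/
structure IsHeadFree (φ : Points dp ≃ Points dm) (l a : Points dp) : Prop where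
  ne : a ≠ l
  head_ne : (φ a).1 ≠ l.1
  arc_notMem : (l.1, (φ a).1) ∉ arcsOff φ {l}

/-- The tail of `a` can be attached to the vertex `v`: this creates neither a loop nor a repeated
arc; moreover `v` is not already the head of `a`. -/
structure IsTailFree (φ : Points dp ≃ Points dm) (l : Points dp) (v : Fin n) (a : Points dp) :
    Prop where
  tail_ne : a.1 ≠ v
  head_ne : (φ a).1 ≠ v
  arc_notMem : (a.1, v) ∉ arcsOff φ {l}

/-- The exchange of `a` with `l` yields a simple pairing, both from `φ` and from `φ` after the
exchange of `l` with `c`. -/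
structure IsGeneric (φ : Points dp ≃ Points dm) (l c a : Points dp) : Prop where
  headFree : IsHeadFree φ l a
  tailFree : IsTailFree φ l (φ l).1 a
  tailFree' : IsTailFree φ l (φ c).1 a

lemma IsHeadFree.isSimple_exchange (h : IsHeadFree φ l a) (ht : IsTailFree φ l (φ l).1 a)
    (hφ : IsSimpleOff φ {l}) : IsSimple (exchange φ l a) := by
  have hsub : ({l} : Set (Points dp)) ⊆ {l, a} := by simp
  exact (hφ.mono hsub).isSimple_exchange h.head_ne.symm ht.tail_ne
    (fun he => ht.head_ne (Prod.ext_iff.1 he).2)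
    (fun hmem => h.arc_notMem (arcsOff_anti hsub hmem))
    (fun hmem => ht.arc_notMem (arcsOff_anti hsub hmem))

lemma IsGeneric.isSimple_exchange (h : IsGeneric φ l c a) (hφ : IsSimpleOff φ {l}) :
    IsSimple (exchange φ l a) :=
  h.headFree.isSimple_exchange h.tailFree hφ

lemma IsGeneric.ne (h : IsGeneric φ l c a) : a ≠ c := by
  rintro rfl
  exact h.tailFree'.head_ne rfl

lemma IsGeneric.isSimple_exchange_exchange (h : IsGeneric φ l c a) (hcl : c ≠ l)
    (hc : IsSimple (exchange φ l c)) : IsSimple (exchange (exchange φ l c) l a) := by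
  have hφa : exchange φ l c a = φ a := exchange_of_ne φ h.headFree.ne h.ne
  refine IsHeadFree.isSimple_exchange ⟨h.headFree.ne, ?_, fun hmem => ?_⟩
    ⟨?_, ?_, fun hmem => ?_⟩ (hc.isSimpleOff {l})
  · rw [hφa]
    exact h.headFree.head_ne
  · rw [hφa] at hmem
    rcases arcsOff_exchange_subset hmem with hnew | hold
    · exact h.tailFree.head_ne (Prod.ext_iff.1 hnew).2
    · exact h.headFree.arc_notMem hold
  · rw [exchange_left]
    exact h.tailFree'.tail_ne
  · rw [exchange_left, hφa]
    exact h.tailFree'.head_ne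
  · rw [exchange_left] at hmem
    rcases arcsOff_exchange_subset hmem with hnew | hold
    · have harc : (a.1, (φ c).1) = arc φ c := congrArg (·, (φ c).1) (Prod.ext_iff.1 hnew).1
      exact h.tailFree'.arc_notMem (harc ▸ arc_mem_arcsOff hcl)
    · exact h.tailFree'.arc_notMem hold

/-! ### Counting generic out-points -/

/-- The degrees are small compared with the number of arcs. -/
structure IsSparse (dm dp : Fin n → ℕ) : Prop where
  two_le : 2 ≤ rmax dm dp
  sq_le : 16 * rmax dm dp ^ 2 ≤ Fintype.card (Points dp)

lemma indegree_le_rmax (v : Fin n) : dm v ≤ rmax dm dp :=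
  (le_max_left _ _).trans (Finset.le_sup (f := fun j => max (dm j) (dp j)) (Finset.mem_univ v))

lemma outdegree_le_rmax (v : Fin n) : dp v ≤ rmax dm dp :=
  (le_max_right _ _).trans (Finset.le_sup (f := fun j => max (dm j) (dp j)) (Finset.mem_univ v))

lemma card_points_fst_eq (d : Fin n → ℕ) (v : Fin n) :
    (Finset.univ.filter fun a : Points d => a.1 = v).card = d v := by
  rw [← Fintype.card_subtype, Fintype.card_congr (Equiv.sigmaSubtype v), Fintype.card_fin]

lemma card_tail_eq_le (v : Fin n) :
    (Finset.univ.filter fun a : Points dp => a.1 = v).card ≤ rmax dm dp :=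
  (card_points_fst_eq dp v).trans_le (outdegree_le_rmax v)

lemma card_head_eq_le (φ : Points dp ≃ Points dm) (v : Fin n) :
    (Finset.univ.filter fun a => (φ a).1 = v).card ≤ rmax dm dp := by
  refine (Finset.card_le_card_of_injOn φ (fun a ha => ?_) φ.injective.injOn).trans
    ((card_points_fst_eq dm v).trans_le (indegree_le_rmax v))
  simpa using ha

lemma card_tail_adjacent_le (φ : Points dp ≃ Points dm) (l : Points dp) (v : Fin n) :
    (Finset.univ.filter fun a : Points dp => (a.1, v) ∈ arcsOff φ {l}).card ≤
      rmax dm dp ^ 2 := by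
  have hsub : (Finset.univ.filter fun a : Points dp => (a.1, v) ∈ arcsOff φ {l}) ⊆
      (Finset.univ.filter fun b => (φ b).1 = v).biUnion fun b =>
        Finset.univ.filter fun a : Points dp => a.1 = b.1 := by
    intro a ha
    obtain ⟨b, -, hb⟩ := (Finset.mem_filter.1 ha).2
    obtain ⟨hb₁, hb₂⟩ := Prod.ext_iff.1 hb
    exact Finset.mem_biUnion.2
      ⟨b, (Finset.mem_filter_univ _).2 hb₂, (Finset.mem_filter_univ _).2 hb₁.symm⟩
  rw [sq]
  exact (Finset.card_le_card hsub).trans ((Finset.card_biUnion_le_card_mul _ _ _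
    fun b _ => card_tail_eq_le b.1).trans (Nat.mul_le_mul_right _ (card_head_eq_le φ v)))

lemma card_head_adjacent_le (φ : Points dp ≃ Points dm) (l : Points dp) (v : Fin n) :
    (Finset.univ.filter fun a => (v, (φ a).1) ∈ arcsOff φ {l}).card ≤ rmax dm dp ^ 2 := by
  have hsub : (Finset.univ.filter fun a => (v, (φ a).1) ∈ arcsOff φ {l}) ⊆
      (Finset.univ.filter fun b : Points dp => b.1 = v).biUnion fun b =>
        Finset.univ.filter fun a => (φ a).1 = (φ b).1 := by
    intro a ha
    obtain ⟨b, -, hb⟩ := (Finset.mem_filter.1 ha).2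
    obtain ⟨hb₁, hb₂⟩ := Prod.ext_iff.1 hb
    exact Finset.mem_biUnion.2
      ⟨b, (Finset.mem_filter_univ _).2 hb₁, (Finset.mem_filter_univ _).2 hb₂.symm⟩
  rw [sq]
  exact (Finset.card_le_card hsub).trans ((Finset.card_biUnion_le_card_mul _ _ _
    fun b _ => card_head_eq_le φ (φ b).1).trans (Nat.mul_le_mul_right _ (card_tail_eq_le v)))

lemma card_not_and_le {α : Type*} [Fintype α] {p q : α → Prop} [DecidablePred fun x => ¬ p x]
    [DecidablePred fun x => ¬ q x] [DecidablePred fun x => ¬ (p x ∧ q x)] {k k' : ℕ}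
    (hp : (Finset.univ.filter fun x => ¬ p x).card ≤ k)
    (hq : (Finset.univ.filter fun x => ¬ q x).card ≤ k') :
    (Finset.univ.filter fun x => ¬ (p x ∧ q x)).card ≤ k + k' := by
  have hunion : (Finset.univ.filter fun x => ¬ (p x ∧ q x)) =
      (Finset.univ.filter fun x => ¬ p x) ∪ (Finset.univ.filter fun x => ¬ q x) := by
    ext x
    simp only [Finset.mem_filter_univ, Finset.mem_union, not_and_or]
  exact hunion ▸ (Finset.card_union_le _ _).trans (add_le_add hp hq)

lemma card_not_isHeadFree_le (φ : Points dp ≃ Points dm) (l : Points dp) :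
    (Finset.univ.filter fun a => ¬ IsHeadFree φ l a).card ≤
      1 + (rmax dm dp + rmax dm dp ^ 2) := by
  have hiff (a : Points dp) : IsHeadFree φ l a ↔
      a ≠ l ∧ (φ a).1 ≠ l.1 ∧ (l.1, (φ a).1) ∉ arcsOff φ {l} :=
    ⟨fun h => ⟨h.ne, h.head_ne, h.arc_notMem⟩, fun ⟨h₁, h₂, h₃⟩ => ⟨h₁, h₂, h₃⟩⟩
  simp only [hiff]
  refine card_not_and_le ?_ (card_not_and_le ?_ ?_)
  · simp [Finset.filter_eq']
  · simpa only [not_not] using card_head_eq_le φ l.1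
  · simpa only [not_not] using card_head_adjacent_le φ l l.1

lemma card_not_isTailFree_le (φ : Points dp ≃ Points dm) (l : Points dp) (v : Fin n) :
    (Finset.univ.filter fun a => ¬ IsTailFree φ l v a).card ≤
      rmax dm dp + (rmax dm dp + rmax dm dp ^ 2) := by
  have hiff (a : Points dp) : IsTailFree φ l v a ↔
      a.1 ≠ v ∧ (φ a).1 ≠ v ∧ (a.1, v) ∉ arcsOff φ {l} :=
    ⟨fun h => ⟨h.tail_ne, h.head_ne, h.arc_notMem⟩, fun ⟨h₁, h₂, h₃⟩ => ⟨h₁, h₂, h₃⟩⟩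
  simp only [hiff]
  refine card_not_and_le ?_ (card_not_and_le ?_ ?_)
  · simpa only [not_not] using card_tail_eq_le v
  · simpa only [not_not] using card_head_eq_le φ v
  · simpa only [not_not] using card_tail_adjacent_le φ l v

lemma card_not_isGeneric_le (φ : Points dp ≃ Points dm) (l c : Points dp) :
    (Finset.univ.filter fun a => ¬ IsGeneric φ l c a).card ≤
      3 * rmax dm dp ^ 2 + 5 * rmax dm dp + 1 := by
  have hiff (a : Points dp) : IsGeneric φ l c a ↔
      IsHeadFree φ l a ∧ IsTailFree φ l (φ l).1 a ∧ IsTailFree φ l (φ c).1 a :=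
    ⟨fun h => ⟨h.headFree, h.tailFree, h.tailFree'⟩, fun ⟨h₁, h₂, h₃⟩ => ⟨h₁, h₂, h₃⟩⟩
  simp only [hiff]
  refine (card_not_and_le (card_not_isHeadFree_le φ l) (card_not_and_le
    (card_not_isTailFree_le φ l _) (card_not_isTailFree_le φ l _))).trans ?_
  linarith

lemma IsSparse.exists_isGeneric (h : IsSparse dm dp) (φ φ' : Points dp ≃ Points dm)
    (l c l' c' b : Points dp) : ∃ a, IsGeneric φ l c a ∧ IsGeneric φ' l' c' a ∧ a ≠ b := by
  by_contra! hcon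
  have hb : (Finset.univ.filter fun a : Points dp => ¬ a ≠ b).card ≤ 1 := by
    simp [Finset.filter_eq']
  have hcard := card_not_and_le (card_not_isGeneric_le φ l c)
    (card_not_and_le (card_not_isGeneric_le φ' l' c') hb)
  rw [Finset.filter_true_of_mem fun a _ ⟨h₁, h₂, h₃⟩ => h₃ (hcon a h₁ h₂),
    Finset.card_univ] at hcard
  nlinarith [h.two_le, h.sq_le]

end Pairings

/-! ### Repairing nearly simple pairings -/

section Repair

variable {dm dp : Fin n → ℕ}

/-- The arc set obtained by repairing `A`, from which an arc out of `u` and an arc into `w` are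
missing: the arc `(u, w)` is added when this is possible, and otherwise a suitable arc `e` is
replaced by `(u, e.2)` and `(e.1, w)`. It depends on arc sets only, not on pairings. -/
def repair (A : Set (Fin n × Fin n)) (u w : Fin n) : Set (Fin n × Fin n) :=
  if u ≠ w ∧ (u, w) ∉ A then insert (u, w) A
  else Classical.epsilon fun B => ∃ e ∈ A, u ≠ e.2 ∧ (u, e.2) ∉ A ∧ e.1 ≠ w ∧ (e.1, w) ∉ A ∧
    B = {(u, e.2), (e.1, w)} ∪ (A \ {e})

/-- The repair of the arc set of `φ` without the arc of the out-point `l`. -/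
def repairedArcs (φ : Points dp ≃ Points dm) (l : Points dp) : Set (Fin n × Fin n) :=
  repair (arcsOff φ {l}) l.1 (φ l).1

variable {φ : Points dp ≃ Points dm} {l a c x : Points dp} {f : Set (Fin n × Fin n) → ℝ}

lemma IsSimpleOff.arcsOff_sdiff_arc (h : IsSimpleOff φ {l}) (hc : c ≠ l) :
    arcsOff φ {l} \ {arc φ c} = arcsOff φ {l, c} := by
  have hcompl : ({l, c} : Set (Points dp))ᶜ = {l}ᶜ \ {c} := by
    ext x
    simp
  rw [arcsOff, arcsOff, hcompl, ← Set.image_singleton,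
    h.2.image_sdiff_subset (by simpa using hc.symm)]

lemma IsSparse.exists_repairedArcs_eq (hd : IsSparse dm dp) (hφ : IsSimpleOff φ {l}) :
    ∃ c, IsSimple (exchange φ l c) ∧ repairedArcs φ l = arcs (exchange φ l c) := by
  unfold repairedArcs repair
  split_ifs with hadd
  · exact ⟨l, by simpa using hφ.isSimple hadd.1 hadd.2,
      by rw [exchange_self, arcs_eq_insert l, arc]⟩
  · obtain ⟨a, ha, -⟩ := hd.exists_isGeneric φ φ l l l l l
    have hex : ∃ B, ∃ e ∈ arcsOff φ {l}, l.1 ≠ e.2 ∧ (l.1, e.2) ∉ arcsOff φ {l} ∧ e.1 ≠ (φ l).1 ∧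
        (e.1, (φ l).1) ∉ arcsOff φ {l} ∧
        B = {(l.1, e.2), (e.1, (φ l).1)} ∪ (arcsOff φ {l} \ {e}) :=
      ⟨_, arc φ a, arc_mem_arcsOff ha.headFree.ne, ha.headFree.head_ne.symm,
        ha.headFree.arc_notMem, ha.tailFree.tail_ne, ha.tailFree.arc_notMem, rfl⟩
    obtain ⟨_, ⟨c, hcl, rfl⟩, htail, harc, hhead, harc', hB⟩ := Classical.epsilon_spec hex
    refine ⟨c, ?_, by rw [hB, hφ.arcsOff_sdiff_arc hcl, arcs_exchange, arc]⟩
    have hheads : (φ c).1 ≠ (φ l).1 := fun h => harc' (h ▸ arc_mem_arcsOff hcl)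
    exact IsHeadFree.isSimple_exchange ⟨hcl, htail.symm, harc⟩ ⟨hhead, hheads, harc'⟩ hφ

lemma IsSparse.card_isSimpleOff_le (hd : IsSparse dm dp) (l : Points dp) :
    (Finset.univ.filter fun φ : Points dp ≃ Points dm => IsSimpleOff φ {l}).card ≤
      Fintype.card (Points dp) *
        (Finset.univ.filter fun φ : Points dp ≃ Points dm => IsSimple φ).card := by
  rw [← Finset.card_univ, ← Finset.card_product]
  refine Finset.card_le_card_of_forall_subsingleton
    (fun φ s => s.2 = exchange φ l s.1) (fun φ hφ => ?_) ?_
  · obtain ⟨c, hc, -⟩ := hd.exists_repairedArcs_eq ((Finset.mem_filter_univ φ).1 hφ)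
    exact ⟨(c, exchange φ l c), by simpa using hc, rfl⟩
  · rintro ⟨c, ψ⟩ - φ ⟨-, hφ⟩ φ' ⟨-, hφ'⟩
    exact (exchange_involutive l c).injective (hφ.symm.trans hφ')

/-- The contribution of the pairing `ψ` to the Dirichlet form of `f ∘ arcs` for the exchanges
between simple pairings. -/
def localEnergy (f : Set (Fin n × Fin n) → ℝ) (ψ : Points dp ≃ Points dm) : ℝ :=
  ∑ p, ∑ q, if IsSimple ψ ∧ IsSimple (exchange ψ p q) then
    (f (arcs ψ) - f (arcs (exchange ψ p q))) ^ 2 else 0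

lemma localEnergy_nonneg (f : Set (Fin n × Fin n) → ℝ) (ψ : Points dp ≃ Points dm) :
    0 ≤ localEnergy f ψ :=
  Finset.sum_nonneg fun p _ => Finset.sum_nonneg fun q _ => by split_ifs <;> positivity

lemma sq_sub_le_localEnergy (f : Set (Fin n × Fin n) → ℝ) {ψ : Points dp ≃ Points dm}
    {p q : Points dp} (hψ : IsSimple ψ) (hψ' : IsSimple (exchange ψ p q)) :
    (f (arcs ψ) - f (arcs (exchange ψ p q))) ^ 2 ≤ localEnergy f ψ := by
  set energy : Points dp → Points dp → ℝ := fun p q =>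
    if IsSimple ψ ∧ IsSimple (exchange ψ p q) then
      (f (arcs ψ) - f (arcs (exchange ψ p q))) ^ 2 else 0
  have hnonneg (p q : Points dp) : 0 ≤ energy p q := by
    dsimp only [energy]
    split_ifs <;> positivity
  calc (f (arcs ψ) - f (arcs (exchange ψ p q))) ^ 2 = energy p q := (if_pos ⟨hψ, hψ'⟩).symm
    _ ≤ ∑ q, energy p q :=
      Finset.single_le_sum (fun q _ => hnonneg p q) (Finset.mem_univ q)
    _ ≤ localEnergy f ψ := Finset.single_le_sum
      (fun p _ => Finset.sum_nonneg fun q _ => hnonneg p q) (Finset.mem_univ p)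

/-- Both pairings are one exchange away from the pairing obtained from `φ` by exchanging `l` with
`c` and then with `a`. -/
lemma IsGeneric.sq_sub_le (h : IsGeneric φ l c a) (hφ : IsSimpleOff φ {l})
    (hc : IsSimple (exchange φ l c)) :
    (f (arcs (exchange φ l c)) - f (arcs (exchange φ l a))) ^ 2 ≤
      2 * (localEnergy f (exchange φ l c) + localEnergy f (exchange φ l a)) := by
  have ha := h.isSimple_exchange hφ
  have hnonneg := localEnergy_nonneg f (exchange φ l c)
  have hnonneg' := localEnergy_nonneg f (exchange φ l a)
  by_cases hcl : c = l
  · subst hcl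
    have hle := sq_sub_le_localEnergy f (p := c) (q := a) (exchange_self φ c ▸ hc) ha
    rw [exchange_self] at hnonneg ⊢
    linarith
  · have hca := h.isSimple_exchange_exchange hcl hc
    have htriangle := exchange_exchange_eq φ hcl h.ne h.headFree.ne
    have hfst := sq_sub_le_localEnergy f hc hca
    have hsnd := sq_sub_le_localEnergy f ha (htriangle ▸ hca)
    rw [← htriangle] at hsnd
    linarith [add_sq_le (a := f (arcs (exchange φ l c)) - f (arcs (exchange (exchange φ l c) l a)))
      (b := f (arcs (exchange (exchange φ l c) l a)) - f (arcs (exchange φ l a))),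
      sub_sq_comm (f (arcs (exchange φ l a))) (f (arcs (exchange (exchange φ l c) l a)))]

/-- An exchange of the out-points `t.2.1` and `t.2.2` between pairings that are simple off
`t.2.1`. -/
structure IsPairingSlide (t : (Points dp ≃ Points dm) × Points dp × Points dp) : Prop where
  source : IsSimpleOff t.1 {t.2.1}
  ne : t.2.2 ≠ t.2.1
  target : IsSimpleOff (exchange t.1 t.2.1 t.2.2) {t.2.1}

/-- The square of the change of `f` at the repaired arc set, along a slide of a pairing. -/
def repairIncrementSq (f : Set (Fin n × Fin n) → ℝ)
    (t : (Points dp ≃ Points dm) × Points dp × Points dp) : ℝ :=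
  (f (repairedArcs (exchange t.1 t.2.1 t.2.2) t.2.1) - f (repairedArcs t.1 t.2.1)) ^ 2

/-- The two repairs are joined by a path of five exchanges through an out-point that is generic for
both pairings. -/
lemma IsPairingSlide.repairIncrementSq_le (hd : IsSparse dm dp)
    (h : IsPairingSlide (φ, l, x)) :
    repairIncrementSq f (φ, l, x) ≤ 15 * ∑ y, localEnergy f (exchange φ l y) +
      12 * ∑ y, localEnergy f (exchange (exchange φ l x) l y) := by
  obtain ⟨hφ, hxl, hφ'⟩ := h
  dsimp only at hφ hxl hφ'
  obtain ⟨c, hc, hrep⟩ := hd.exists_repairedArcs_eq hφ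
  obtain ⟨c', hc', hrep'⟩ := hd.exists_repairedArcs_eq hφ'
  obtain ⟨a, ha, ha', hax⟩ := hd.exists_isGeneric φ (exchange φ l x) l c l c' x
  have hbridge : exchange (exchange φ l x) l a = exchange (exchange φ l a) a x :=
    exchange_exchange_eq φ hxl hax ha.headFree.ne
  have hle (ψ : Points dp ≃ Points dm) (y : Points dp) :
      localEnergy f (exchange ψ l y) ≤ ∑ y, localEnergy f (exchange ψ l y) :=
    Finset.single_le_sum (f := fun y => localEnergy f (exchange ψ l y))
      (fun y _ => localEnergy_nonneg f _) (Finset.mem_univ y)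
  have hfst := ha.sq_sub_le (f := f) hφ hc
  have hmid := sq_sub_le_localEnergy f (ha.isSimple_exchange hφ)
    (hbridge ▸ ha'.isSimple_exchange hφ')
  have hlst := ha'.sq_sub_le (f := f) hφ' hc'
  rw [← hbridge] at hmid
  simp only [repairIncrementSq, hrep, hrep']
  have htriangle (x₁ x₂ x₃ x₄ : ℝ) :
      (x₄ - x₁) ^ 2 ≤ 3 * ((x₁ - x₂) ^ 2 + (x₂ - x₃) ^ 2 + (x₄ - x₃) ^ 2) := by
    nlinarith [sq_nonneg ((x₁ - x₂) - (x₂ - x₃)), sq_nonneg ((x₁ - x₂) - (x₃ - x₄)),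
      sq_nonneg ((x₂ - x₃) - (x₃ - x₄))]
  refine (htriangle _ (f (arcs (exchange φ l a)))
    (f (arcs (exchange (exchange φ l x) l a))) _).trans ?_
  linarith [hle φ c, hle φ a, hle (exchange φ l x) c', hle (exchange φ l x) a]

lemma sum_exchange (g : (Points dp ≃ Points dm) → ℝ) (l x : Points dp) :
    ∑ φ, g (exchange φ l x) = ∑ φ, g φ :=
  (exchange_involutive l x).bijective.sum_comp g

lemma IsSparse.sum_repairIncrementSq_le (hd : IsSparse dm dp) (f : Set (Fin n × Fin n) → ℝ) :
    ∑ t : (Points dp ≃ Points dm) × Points dp × Points dp with IsPairingSlide t,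
      repairIncrementSq f t ≤
      27 * (Fintype.card (Points dp) : ℝ) ^ 3 * ∑ ψ : Points dp ≃ Points dm, localEnergy f ψ := by
  set m : ℝ := (Fintype.card (Points dp) : ℝ)
  set E := ∑ ψ : Points dp ≃ Points dm, localEnergy f ψ
  let around (φ : Points dp ≃ Points dm) (l : Points dp) : ℝ := ∑ y, localEnergy f (exchange φ l y)
  have haround_nonneg (φ l) : 0 ≤ around φ l :=
    Finset.sum_nonneg fun _ _ => localEnergy_nonneg f _
  have hsum_around (l : Points dp) : ∑ φ, around φ l = m * E := by
    rw [Finset.sum_comm, Finset.sum_congr rfl fun y _ => sum_exchange (localEnergy f) l y,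
      Finset.sum_const, nsmul_eq_mul, Finset.card_univ]
  calc ∑ t with IsPairingSlide t, repairIncrementSq f t
      ≤ ∑ t with IsPairingSlide t,
          (15 * around t.1 t.2.1 + 12 * around (exchange t.1 t.2.1 t.2.2) t.2.1) :=
        Finset.sum_le_sum fun t ht => ((Finset.mem_filter_univ t).1 ht).repairIncrementSq_le hd
    _ ≤ ∑ t : (Points dp ≃ Points dm) × Points dp × Points dp,
          (15 * around t.1 t.2.1 + 12 * around (exchange t.1 t.2.1 t.2.2) t.2.1) :=
        Finset.sum_le_univ_sum_of_nonneg fun t =>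
          add_nonneg (mul_nonneg (by norm_num) (haround_nonneg _ _))
            (mul_nonneg (by norm_num) (haround_nonneg _ _))
    _ = ∑ l : Points dp, ∑ x : Points dp, ∑ φ : Points dp ≃ Points dm,
          (15 * around φ l + 12 * around (exchange φ l x) l) := by
        rw [Fintype.sum_prod_type, Finset.sum_comm, Fintype.sum_prod_type]
    _ = ∑ _l : Points dp, ∑ _x : Points dp, 27 * (m * E) := by
        refine Finset.sum_congr rfl fun l _ => Finset.sum_congr rfl fun x _ => ?_
        rw [Finset.sum_add_distrib, ← Finset.mul_sum, ← Finset.mul_sum,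
          sum_exchange (fun φ => around φ l), hsum_around]
        ring
    _ = 27 * m ^ 3 * E := by
        simp only [Finset.sum_const, Finset.card_univ, nsmul_eq_mul]
        ring

end Repair

/-! ### Pairings as matchings of an auxiliary bipartite graph -/

section Gadget

variable {dm dp : Fin n → ℕ}

/-- Left vertices of the auxiliary bipartite graph: the out-points, and a node for each possible
arc. -/
abbrev GadgetLeft (dp : Fin n → ℕ) : Type := Points dp ⊕ (Fin n × Fin n)

/-- Right vertices of the auxiliary bipartite graph: a node for each possible arc, and the
in-points. -/
abbrev GadgetRight (dm : Fin n → ℕ) : Type := (Fin n × Fin n) ⊕ Points dm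

/-- The auxiliary bipartite graph. In a perfect matching the two nodes of an arc `e` are matched
to each other when `e` is absent, and to an out-point of the tail and an in-point of the head of
`e` when it is present; so perfect matchings are simple pairings. -/
def gadgetAdj : GadgetLeft dp → GadgetRight dm → Prop
  | .inl a, .inl e => e.1 = a.1 ∧ e.1 ≠ e.2
  | .inl _, .inr _ => False
  | .inr e, .inl e' => e = e'
  | .inr e, .inr b => e.2 = b.1

/-- The head of a right vertex of the auxiliary graph. -/
def gadgetHead : GadgetRight dm → Fin n
  | .inl e => e.2
  | .inr b => b.1

/-- The arcs whose nodes are the partners of the out-points outside `S`. -/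
def gadgetArcs (N : GadgetLeft dp ≃ GadgetRight dm) (S : Set (Points dp)) : Set (Fin n × Fin n) :=
  {e | ∃ a ∉ S, N (.inl a) = .inl e}

/-- The pairing `φ` is obtained from `N` by following each out-point through an arc node, if any,
to an in-point. -/
def Represents (N : GadgetLeft dp ≃ GadgetRight dm) (φ : Points dp ≃ Points dm) : Prop :=
  ∀ a, N (.inl a) = .inr (φ a) ∨ ∃ e, N (.inl a) = .inl e ∧ N (.inr e) = .inr (φ a)

variable {N N' : GadgetLeft dp ≃ GadgetRight dm} {φ ψ : Points dp ≃ Points dm} {l a : Points dp}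
  {S : Set (Points dp)}

lemma exists_eq_inl_of_gadgetAdj {z : GadgetRight dm} (h : gadgetAdj (.inl a) z) :
    ∃ e, z = .inl e ∧ e.1 = a.1 ∧ e.1 ≠ e.2 := by
  cases z with
  | inl e => exact ⟨e, rfl, h⟩
  | inr b => exact h.elim

lemma gadgetAdj_inr_inl {e e' : Fin n × Fin n} :
    gadgetAdj (dm := dm) (dp := dp) (.inr e) (.inl e') ↔ e = e' := Iff.rfl

lemma gadgetAdj_inr_inr {e : Fin n × Fin n} {b : Points dm} :
    gadgetAdj (dp := dp) (.inr e) (.inr b) ↔ e.2 = b.1 := Iff.rfl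

lemma gadgetHead_eq_of_gadgetAdj {e : Fin n × Fin n} {z : GadgetRight dm}
    (h : gadgetAdj (dp := dp) (.inr e) z) : gadgetHead z = e.2 := by
  cases z with
  | inl e' => exact congrArg Prod.snd (gadgetAdj_inr_inl.1 h).symm
  | inr b => exact (gadgetAdj_inr_inr.1 h).symm

lemma gadgetArcs_eq_arcsOff (h : ∀ a ∉ S, N (.inl a) = .inl (arc φ a)) :
    gadgetArcs N S = arcsOff φ S := by
  ext e
  exact exists_congr fun a => and_congr_right fun ha => by rw [h a ha, Sum.inl.injEq]

lemma gadgetArcs_empty {e : Fin n × Fin n} (h : N (.inl a) = .inl e) :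
    gadgetArcs N ∅ = insert e (gadgetArcs N {a}) := by
  ext e'
  constructor
  · rintro ⟨b, -, hb⟩
    by_cases hba : b = a
    · exact .inl (Sum.inl_injective (hb.symm.trans (hba ▸ h)))
    · exact .inr ⟨b, hba, hb⟩
  · rintro (rfl | ⟨b, -, hb⟩)
    exacts [⟨a, id, h⟩, ⟨b, id, hb⟩]

lemma card_points_eq_of_gadget (N : GadgetLeft dp ≃ GadgetRight dm) :
    Fintype.card (Points dp) = Fintype.card (Points dm) := by
  have hcard := Fintype.card_congr N
  rw [Fintype.card_sum, Fintype.card_sum] at hcard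
  omega

lemma exists_represents (hN : ∀ e, gadgetAdj (dp := dp) (.inr e) (N (.inr e))) :
    ∃ φ, Represents N φ := by
  have hend (a : Points dp) :
      ∃ b, N (.inl a) = .inr b ∨ ∃ e, N (.inl a) = .inl e ∧ N (.inr e) = .inr b := by
    rcases ha : N (.inl a) with e | b
    · rcases he : N (.inr e) with e' | b
      · obtain rfl : e = e' := by simpa only [he, gadgetAdj_inr_inl] using hN e
        exact absurd (N.injective (ha.trans he.symm)) Sum.inl_ne_inr
      · exact ⟨b, .inr ⟨e, rfl, he⟩⟩
    · exact ⟨b, .inl rfl⟩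
  choose g hg using hend
  have hinj : Function.Injective g := by
    intro a a' haa
    rcases hg a with h | ⟨e, h, he⟩ <;> rcases hg a' with h' | ⟨e', h', he'⟩
    · exact Sum.inl_injective (N.injective (by rw [h, h', haa]))
    · exact absurd (N.injective (by rw [h, he', haa])) (Sum.inl_ne_inr (a := a) (b := e'))
    · exact absurd (N.injective (by rw [h', he, haa])) (Sum.inl_ne_inr (a := a') (b := e))
    · obtain rfl : e = e' := Sum.inr_injective (N.injective (by rw [he, he', haa]))
      exact Sum.inl_injective (N.injective (h.trans h'.symm))
  exact ⟨Equiv.ofBijective g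
    ((Fintype.bijective_iff_injective_and_card g).2 ⟨hinj, card_points_eq_of_gadget N⟩), hg⟩

lemma IsNearPerfect.gadgetAdj_inr (hN : IsNearPerfect gadgetAdj N (.inl l)) (e : Fin n × Fin n) :
    gadgetAdj (dp := dp) (.inr e) (N (.inr e)) :=
  hN _ Sum.inr_ne_inl

namespace Represents

lemma apply_inr_of_apply_inl (h : Represents N φ) {e : Fin n × Fin n} (he : N (.inl a) = .inl e) :
    N (.inr e) = .inr (φ a) := by
  rcases h a with h' | ⟨e', h', h''⟩
  · exact absurd (he.symm.trans h') Sum.inl_ne_inr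
  · rwa [← Sum.inl_injective (he.symm.trans h')] at h''

lemma eq_of_apply_inl_eq_inr (h : Represents N φ) {b : Points dm} (hb : N (.inl a) = .inr b) :
    b = φ a := by
  rcases h a with h' | ⟨e', h', -⟩
  · exact Sum.inr_injective (hb.symm.trans h')
  · exact absurd (h'.symm.trans hb) Sum.inl_ne_inr

lemma apply_inl_of_apply_inr (h : Represents N φ) {e : Fin n × Fin n} {b : Points dm}
    (he : N (.inr e) = .inr b) : N (.inl (φ.symm b)) = .inl e := by
  rcases h (φ.symm b) with h' | ⟨e', h', h''⟩ <;> rw [Equiv.apply_symm_apply, ← he] at *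
  · exact absurd (N.injective h') Sum.inl_ne_inr
  · rwa [← Sum.inr_injective (N.injective h'')]

lemma unique (h : Represents N φ) (h' : Represents N ψ) : φ = ψ := by
  ext1 a
  rcases ha : N (.inl a) with e | b
  · exact Sum.inr_injective
      ((h.apply_inr_of_apply_inl ha).symm.trans (h'.apply_inr_of_apply_inl ha))
  · exact (h.eq_of_apply_inl_eq_inr ha).symm.trans (h'.eq_of_apply_inl_eq_inr ha)

lemma apply_inl_of_gadgetAdj (h : Represents N φ) (ha : gadgetAdj (.inl a) (N (.inl a)))
    (hN : ∀ e, gadgetAdj (dp := dp) (.inr e) (N (.inr e))) :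
    N (.inl a) = .inl (arc φ a) ∧ a.1 ≠ (φ a).1 := by
  obtain ⟨e, he, htail, hloop⟩ := exists_eq_inl_of_gadgetAdj ha
  have hhead : e.2 = (φ a).1 := by
    simpa only [h.apply_inr_of_apply_inl he, gadgetAdj_inr_inr] using hN e
  have harc : e = arc φ a := Prod.ext htail hhead
  exact ⟨harc ▸ he, htail ▸ hhead ▸ hloop⟩

lemma exchange (h : Represents N φ) :
    Represents (DirectedSwitchChain.exchange N (.inl l) (.inl a))
      (DirectedSwitchChain.exchange φ l a) := by
  intro b
  have hinr (e : Fin n × Fin n) :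
      DirectedSwitchChain.exchange N (.inl l) (.inl a) (.inr e) = N (.inr e) :=
    exchange_of_ne N Sum.inr_ne_inl Sum.inr_ne_inl
  simp only [hinr]
  by_cases hl : b = l
  · simpa only [hl, exchange_left] using h a
  by_cases ha : b = a
  · simpa only [ha, exchange_right] using h l
  rw [exchange_of_ne φ hl ha, exchange_of_ne N (Sum.inl_injective.ne hl) (Sum.inl_injective.ne ha)]
  exact h b

lemma apply_inl (h : Represents N φ) (hN : IsNearPerfect gadgetAdj N (.inl l)) (ha : a ≠ l) :
    N (.inl a) = .inl (arc φ a) ∧ a.1 ≠ (φ a).1 :=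
  h.apply_inl_of_gadgetAdj (hN _ (Sum.inl_injective.ne ha)) hN.gadgetAdj_inr

lemma gadgetHead_eq (h : Represents N φ) (hN : IsNearPerfect gadgetAdj N (.inl l)) :
    gadgetHead (N (.inl l)) = (φ l).1 := by
  rcases h l with hl | ⟨e, hl, he⟩
  · rw [hl, gadgetHead]
  · rw [hl, gadgetHead]
    simpa only [he, gadgetAdj_inr_inr] using hN.gadgetAdj_inr e

lemma isSimpleOff (h : Represents N φ) (hN : IsNearPerfect gadgetAdj N (.inl l)) :
    IsSimpleOff φ {l} := by
  refine ⟨fun a ha => (h.apply_inl hN ha).2, fun a ha b hb hab => ?_⟩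
  exact Sum.inl_injective (N.injective
    (by rw [(h.apply_inl hN ha).1, (h.apply_inl hN hb).1, hab]))

lemma gadgetArcs_eq (h : Represents N φ) (hN : IsNearPerfect gadgetAdj N (.inl l)) :
    gadgetArcs N {l} = arcsOff φ {l} :=
  gadgetArcs_eq_arcsOff fun _ ha => (h.apply_inl hN ha).1

/-- A near-perfect matching is determined by its pairing and its value at the mark: the partner of
an arc node is read off from the partners of the out-points. -/
lemma ext (h : Represents N φ) (hN : IsNearPerfect gadgetAdj N (.inl l))
    (h' : Represents N' φ) (hN' : IsNearPerfect gadgetAdj N' (.inl l))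
    (hl : N (.inl l) = N' (.inl l)) : N = N' := by
  have hinl (a : Points dp) : N (.inl a) = N' (.inl a) := by
    by_cases ha : a = l
    · rw [ha, hl]
    · rw [(h.apply_inl hN ha).1, (h'.apply_inl hN' ha).1]
  ext1 x
  rcases x with a | e
  · exact hinl a
  rcases he : N (.inr e) with e₁ | b
  · rcases he' : N' (.inr e) with e₂ | b'
    · have h₁ : e = e₁ := by simpa only [he, gadgetAdj_inr_inl] using hN.gadgetAdj_inr e
      have h₂ : e = e₂ := by simpa only [he', gadgetAdj_inr_inl] using hN'.gadgetAdj_inr e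
      rw [← h₁, ← h₂]
    · have hinr := h.apply_inr_of_apply_inl ((hinl _).trans (h'.apply_inl_of_apply_inr he'))
      exact absurd (he.symm.trans hinr) Sum.inl_ne_inr
  · rw [h'.apply_inr_of_apply_inl ((hinl _).symm.trans (h.apply_inl_of_apply_inr he)),
      Equiv.apply_symm_apply]

end Represents

/-- The involution exchanging each out-point with the left node of its arc in `φ`. -/
def arcNodeSwap (φ : Points dp ≃ Points dm) : GadgetLeft dp → GadgetLeft dp :=
  Sum.elim (Sum.inr ∘ arc φ) (Function.extend (arc φ) Sum.inl Sum.inr)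

lemma arcNodeSwap_inr_arc (hφ : Function.Injective (arc φ)) (a : Points dp) :
    arcNodeSwap φ (.inr (arc φ a)) = .inl a :=
  hφ.extend_apply _ _ a

lemma arcNodeSwap_inr_of_notMem {e : Fin n × Fin n} (he : e ∉ arcs φ) :
    arcNodeSwap φ (.inr e) = .inr e :=
  Function.extend_apply' _ _ e he

lemma arcNodeSwap_involutive (hφ : Function.Injective (arc φ)) :
    Function.Involutive (arcNodeSwap φ) := by
  rintro (a | e)
  · exact arcNodeSwap_inr_arc hφ a
  · by_cases he : e ∈ arcs φ
    · obtain ⟨a, rfl⟩ := he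
      rw [arcNodeSwap_inr_arc hφ]
      rfl
    · rw [arcNodeSwap_inr_of_notMem he, arcNodeSwap_inr_of_notMem he]

lemma IsSimple.exists_isPerfect (hφ : IsSimple φ) :
    ∃ σ : GadgetLeft dp ≃ GadgetRight dm,
      IsPerfect gadgetAdj σ ∧ Represents σ φ ∧ gadgetArcs σ ∅ = arcs φ := by
  let σ : GadgetLeft dp ≃ GadgetRight dm := (arcNodeSwap_involutive hφ.2).toPerm.trans
    ((Equiv.sumComm _ _).trans (Equiv.sumCongr (Equiv.refl _) φ))
  have hinl (a : Points dp) : σ (.inl a) = .inl (arc φ a) := rfl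
  have hinr (a : Points dp) : σ (.inr (arc φ a)) = .inr (φ a) := by
    simp [σ, arcNodeSwap_inr_arc hφ.2]
  refine ⟨σ, ?_, fun a => .inr ⟨_, hinl a, hinr a⟩, ?_⟩
  · rintro (a | e)
    · exact ⟨rfl, hφ.1 a⟩
    · by_cases he : e ∈ arcs φ
      · obtain ⟨a, rfl⟩ := he
        rw [hinr]
        rfl
      · have habsent : σ (.inr e) = .inl e := by simp [σ, arcNodeSwap_inr_of_notMem he]
        rw [habsent]
        rfl
  · rw [gadgetArcs_eq_arcsOff fun a _ => hinl a, arcsOff_empty]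

/-- The extension of `f` from simple digraphs to near-perfect matchings of the auxiliary graph. -/
def repairExtension (f : Set (Fin n × Fin n) → ℝ) (N : GadgetLeft dp ≃ GadgetRight dm) :
    GadgetLeft dp → ℝ
  | .inl l => f (repair (gadgetArcs N {l}) l.1 (gadgetHead (N (.inl l))))
  | .inr _ => f (gadgetArcs N ∅)

variable (f : Set (Fin n × Fin n) → ℝ)

lemma Represents.repairExtension_eq (h : Represents N φ)
    (hN : IsNearPerfect gadgetAdj N (.inl l)) :
    repairExtension f N (.inl l) = f (repairedArcs φ l) := by
  rw [repairExtension, h.gadgetArcs_eq hN, h.gadgetHead_eq hN, repairedArcs]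

lemma repairExtension_of_isPerfect {σ : GadgetLeft dp ≃ GadgetRight dm}
    (hσ : IsPerfect gadgetAdj σ) (x : GadgetLeft dp) :
    repairExtension f σ x = f (gadgetArcs σ ∅) := by
  rcases x with l | _
  · obtain ⟨e, he, htail, hloop⟩ := exists_eq_inl_of_gadgetAdj (hσ (.inl l))
    have hnew : e ∉ gadgetArcs σ {l} := fun ⟨a, ha, hae⟩ =>
      ha (Sum.inl_injective (σ.injective (hae.trans he.symm)))
    rw [repairExtension, he, gadgetHead, ← htail, repair, if_pos ⟨hloop, hnew⟩,
      gadgetArcs_empty he]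
  · rfl

/-- Sliding an arc node changes neither the arcs chosen by the out-points nor the head of the
unmatched right vertex. -/
lemma repairExtension_exchange_inr {x : GadgetLeft dp} {e : Fin n × Fin n} (hne : .inr e ≠ x)
    (hN : IsNearPerfect gadgetAdj N x) (he : gadgetAdj (dp := dp) (.inr e) (N x)) :
    repairExtension f (exchange N x (.inr e)) x = repairExtension f N x := by
  rcases x with l | e₀
  · have harcs : gadgetArcs (exchange N (.inl l) (.inr e)) {l} = gadgetArcs N {l} := by
      ext e'
      refine exists_congr fun a => and_congr_right fun ha => ?_
      rw [exchange_of_ne N (Sum.inl_injective.ne ha) Sum.inl_ne_inr]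
    rw [repairExtension, repairExtension, harcs, exchange_left,
      gadgetHead_eq_of_gadgetAdj (hN _ hne), gadgetHead_eq_of_gadgetAdj he]
  · have hinl (a : Points dp) : exchange N (.inr e₀) (.inr e) (.inl a) = N (.inl a) :=
      exchange_of_ne N Sum.inl_ne_inr Sum.inl_ne_inr
    simp only [repairExtension, gadgetArcs, hinl]

/-- A near-perfect matching is determined by its pairing and its value at the mark, which is either
an arc node or the in-point paired with the mark. -/
lemma card_isNearPerfect_gadgetAdj_le (l : Points dp) :
    (Finset.univ.filter fun N : GadgetLeft dp ≃ GadgetRight dm =>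
      IsNearPerfect gadgetAdj N (.inl l)).card ≤
      (n ^ 2 + 1) *
        (Finset.univ.filter fun φ : Points dp ≃ Points dm => IsSimpleOff φ {l}).card := by
  have hcard : (Finset.univ : Finset (Option (Fin n × Fin n))).card = n ^ 2 + 1 := by
    simp [sq]
  rw [← hcard, ← Finset.card_product]
  refine Finset.card_le_card_of_forall_subsingleton
    (fun N s => IsNearPerfect gadgetAdj N (.inl l) ∧ Represents N s.2 ∧
      N (.inl l) = s.1.elim (.inr (s.2 l)) .inl) (fun N hN => ?_) ?_
  · have hN := (Finset.mem_filter_univ N).1 hN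
    obtain ⟨φ, hφ⟩ := exists_represents hN.gadgetAdj_inr
    have hmem : φ ∈ Finset.univ.filter fun φ : Points dp ≃ Points dm => IsSimpleOff φ {l} :=
      (Finset.mem_filter_univ φ).2 (hφ.isSimpleOff hN)
    rcases hl : N (.inl l) with e | b
    · exact ⟨(some e, φ), Finset.mk_mem_product (Finset.mem_univ _) hmem, hN, hφ, rfl⟩
    · exact ⟨(none, φ), Finset.mk_mem_product (Finset.mem_univ _) hmem, hN, hφ,
        congrArg _ (hφ.eq_of_apply_inl_eq_inr hl)⟩
  · rintro ⟨o, φ⟩ - N ⟨-, hN, hφ, hl⟩ N' ⟨-, hN', hφ', hl'⟩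
    exact hφ.ext hN hφ' hN' (hl.trans hl'.symm)

end Gadget

/-! ### The Poincaré inequality for simple pairings -/

section PairingPoincare

lemma sum_le_sum_of_injective_relation {α β : Type*} {s : Finset α} {t : Finset β} {u : α → ℝ}
    {v : β → ℝ} (r : α → β → Prop) (hr : ∀ a ∈ s, ∃ b ∈ t, r a b)
    (hinj : ∀ a ∈ s, ∀ a' ∈ s, ∀ b ∈ t, r a b → r a' b → a = a')
    (hle : ∀ a ∈ s, ∀ b ∈ t, r a b → u a ≤ v b) (hv : ∀ b ∈ t, 0 ≤ v b) :
    ∑ a ∈ s, u a ≤ ∑ b ∈ t, v b := by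
  calc ∑ a ∈ s, u a ≤ ∑ a ∈ s, ∑ b ∈ t with r a b, v b := by
        refine Finset.sum_le_sum fun a ha => ?_
        obtain ⟨b, hb, hab⟩ := hr a ha
        exact (hle a ha b hb hab).trans (Finset.single_le_sum
          (fun c hc => hv c (Finset.mem_filter.1 hc).1) (Finset.mem_filter.2 ⟨hb, hab⟩))
    _ = ∑ b ∈ t, ∑ a ∈ s with r a b, v b :=
        Finset.sum_comm' fun a b => by simp only [Finset.mem_filter]; tauto
    _ ≤ ∑ b ∈ t, v b := by
        refine Finset.sum_le_sum fun b hb => ?_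
        have hcard : (s.filter fun a => r a b).card ≤ 1 := by
          refine Finset.card_le_one.2 fun a ha a' ha' => ?_
          rw [Finset.mem_filter] at ha ha'
          exact hinj a ha.1 a' ha'.1 b hb ha.2 ha'.2
        rw [Finset.sum_const, nsmul_eq_mul]
        exact mul_le_of_le_one_left (hv b hb) (mod_cast hcard)

variable {dm dp : Fin n → ℕ}

/-- The out-points among the left vertices of the auxiliary graph. -/
def outPoints (dp : Fin n → ℕ) : Finset (GadgetLeft dp) :=
  Finset.univ.map Function.Embedding.inl

lemma inl_mem_outPoints (a : Points dp) : .inl a ∈ outPoints dp := by simp [outPoints]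

lemma inr_notMem_outPoints (e : Fin n × Fin n) : .inr e ∉ outPoints dp := by simp [outPoints]

lemma card_outPoints : (outPoints dp).card = Fintype.card (Points dp) := by
  rw [outPoints, Finset.card_map, Finset.card_univ]

/-- A ranking of the left vertices of the auxiliary graph with the out-points first. -/
def gadgetRank (dp : Fin n → ℕ) : GadgetLeft dp → ℕ :=
  Fin.val ∘ finSumFinEquiv ∘ Sum.map (Fintype.equivFin _) (Fintype.equivFin _)

lemma gadgetRank_injective : Function.Injective (gadgetRank dp) :=
  Fin.val_injective.comp (finSumFinEquiv.injective.comp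
    (Sum.map_injective.2 ⟨Equiv.injective _, Equiv.injective _⟩))

lemma gadgetRank_lt : ∀ x ∈ outPoints dp, ∀ y ∉ outPoints dp, gadgetRank dp x < gadgetRank dp y
  | .inl a, _, .inr e, _ => by
    simp only [gadgetRank, Function.comp_apply, Sum.map_inl, Sum.map_inr,
      finSumFinEquiv_apply_left, finSumFinEquiv_apply_right, Fin.val_castAdd, Fin.val_natAdd]
    omega
  | _, _, .inl a, ha => absurd (inl_mem_outPoints a) ha
  | .inr e, he, _, _ => absurd he (inr_notMem_outPoints e)

variable (f : Set (Fin n × Fin n) → ℝ)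

lemma sum_isSimple_sq_sub_le :
    ∑ φ : Points dp ≃ Points dm with IsSimple φ, ∑ φ' : Points dp ≃ Points dm with IsSimple φ',
      (f (arcs φ) - f (arcs φ')) ^ 2 ≤
    ∑ σ : GadgetLeft dp ≃ GadgetRight dm with IsPerfect gadgetAdj σ,
      ∑ σ' : GadgetLeft dp ≃ GadgetRight dm with IsPerfect gadgetAdj σ',
        (f (gadgetArcs σ ∅) - f (gadgetArcs σ' ∅)) ^ 2 := by
  let r (φ : Points dp ≃ Points dm) (σ : GadgetLeft dp ≃ GadgetRight dm) : Prop :=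
    Represents σ φ ∧ gadgetArcs σ ∅ = arcs φ
  have hr : ∀ φ ∈ Finset.univ.filter (IsSimple (dm := dm) (dp := dp)),
      ∃ σ ∈ Finset.univ.filter (IsPerfect gadgetAdj), r φ σ := by
    intro φ hφ
    obtain ⟨σ, hσ, hrep, harcs⟩ := ((Finset.mem_filter_univ φ).1 hφ).exists_isPerfect
    exact ⟨σ, (Finset.mem_filter_univ σ).2 hσ, hrep, harcs⟩
  refine sum_le_sum_of_injective_relation r hr (fun _ _ _ _ _ _ h h' => h.1.unique h'.1)
    (fun φ _ σ _ h => ?_) fun _ _ => Finset.sum_nonneg fun _ _ => sq_nonneg _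
  refine sum_le_sum_of_injective_relation r hr (fun _ _ _ _ _ _ h h' => h.1.unique h'.1)
    (fun φ' _ σ' _ h' => ?_) fun _ _ => sq_nonneg _
  rw [h.2, h'.2]

lemma Represents.isPairingSlide {N : GadgetLeft dp ≃ GadgetRight dm} {φ : Points dp ≃ Points dm}
    {l x : Points dp} (h : Represents N φ)
    (ht : IsSlide gadgetAdj (outPoints dp) (N, .inl l, .inl x)) : IsPairingSlide (φ, l, x) where
  source := h.isSimpleOff ht.isNearPerfect
  ne := fun hxl => ht.ne (congrArg Sum.inl hxl)
  target := h.exchange.isSimpleOff (ht.isNearPerfect.exchange ht.adj)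

lemma Represents.slideIncrement_sq_eq {N : GadgetLeft dp ≃ GadgetRight dm}
    {φ : Points dp ≃ Points dm} {l x : Points dp} (h : Represents N φ)
    (ht : IsSlide gadgetAdj (outPoints dp) (N, .inl l, .inl x)) :
    slideIncrement (repairExtension f) (N, .inl l, .inl x) ^ 2 = repairIncrementSq f (φ, l, x) := by
  simp only [slideIncrement, repairIncrementSq]
  rw [h.repairExtension_eq f ht.isNearPerfect,
    h.exchange.repairExtension_eq f (ht.isNearPerfect.exchange ht.adj)]

/-- The slide determines the value at the mark: it is the node of the arc from the moved
out-point to the head of the mark's partner. -/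
lemma Represents.eq_of_isSlide {N N' : GadgetLeft dp ≃ GadgetRight dm}
    {φ : Points dp ≃ Points dm} {l x : Points dp} (h : Represents N φ) (h' : Represents N' φ)
    (ht : IsSlide gadgetAdj (outPoints dp) (N, .inl l, .inl x))
    (ht' : IsSlide gadgetAdj (outPoints dp) (N', .inl l, .inl x)) : N = N' := by
  have hmark {N : GadgetLeft dp ≃ GadgetRight dm} (h : Represents N φ)
      (ht : IsSlide gadgetAdj (outPoints dp) (N, .inl l, .inl x)) :
      N (.inl l) = .inl (x.1, (φ l).1) := by
    obtain ⟨e, he, htail, -⟩ := exists_eq_inl_of_gadgetAdj ht.adj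
    have hhead := h.gadgetHead_eq ht.isNearPerfect
    rw [he, gadgetHead] at hhead
    exact he.trans (congrArg Sum.inl (Prod.ext htail hhead))
  exact h.ext ht.isNearPerfect h' ht'.isNearPerfect ((hmark h ht).trans (hmark h' ht').symm)

lemma sum_slideIncrement_sq_le :
    ∑ t : (GadgetLeft dp ≃ GadgetRight dm) × GadgetLeft dp × GadgetLeft dp with
        IsSlide gadgetAdj (outPoints dp) t, slideIncrement (repairExtension f) t ^ 2 ≤
      ∑ s : (Points dp ≃ Points dm) × Points dp × Points dp with IsPairingSlide s,
        repairIncrementSq f s := by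
  refine sum_le_sum_of_injective_relation
    (fun t s => Represents t.1 s.1 ∧ t.2.1 = .inl s.2.1 ∧ t.2.2 = .inl s.2.2) ?_ ?_ ?_
    fun _ _ => sq_nonneg _
  · rintro ⟨N, l | e, x | e'⟩ ht <;> rw [Finset.mem_filter_univ] at ht
    · obtain ⟨φ, hφ⟩ := exists_represents ht.isNearPerfect.gadgetAdj_inr
      exact ⟨(φ, l, x), (Finset.mem_filter_univ _).2 (hφ.isPairingSlide ht), hφ, rfl, rfl⟩
    · exact absurd ht.moved_mem (inr_notMem_outPoints e')
    · exact absurd ht.mark_mem (inr_notMem_outPoints e)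
    · exact absurd ht.mark_mem (inr_notMem_outPoints e)
  · rintro ⟨N, _, _⟩ ht ⟨N', _, _⟩ ht' ⟨φ, l, x⟩ - ⟨h, rfl, rfl⟩ ⟨h', rfl, rfl⟩
    obtain rfl :=
      h.eq_of_isSlide h' ((Finset.mem_filter_univ _).1 ht) ((Finset.mem_filter_univ _).1 ht')
    rfl
  · rintro ⟨N, _, _⟩ ht ⟨φ, l, x⟩ - ⟨h, rfl, rfl⟩
    exact (h.slideIncrement_sq_eq f ((Finset.mem_filter_univ _).1 ht)).le

theorem IsSparse.pairing_poincare (hd : IsSparse dm dp) :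
    ∑ φ : Points dp ≃ Points dm with IsSimple φ, ∑ φ' : Points dp ≃ Points dm with IsSimple φ',
      (f (arcs φ) - f (arcs φ')) ^ 2 ≤
    27 * (n ^ 2 + 1) * (Fintype.card (Points dp) : ℝ) ^ 5 *
      (Finset.univ.filter fun φ : Points dp ≃ Points dm => IsSimple φ).card *
      ∑ ψ : Points dp ≃ Points dm, localEnergy f ψ := by
  set m : ℝ := (Fintype.card (Points dp) : ℝ)
  set N : ℝ := ((Finset.univ.filter fun φ : Points dp ≃ Points dm => IsSimple φ).card : ℝ)
  have hcard : ∀ x ∈ outPoints dp, ((Finset.univ.filter fun σ : GadgetLeft dp ≃ GadgetRight dm =>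
      IsNearPerfect gadgetAdj σ x).card : ℝ) ≤ (n ^ 2 + 1) * (m * N) := by
    rintro (l | e) hx
    · refine le_of_le_of_eq (Nat.cast_le.2 <| (card_isNearPerfect_gadgetAdj_le l).trans
        (Nat.mul_le_mul_left _ (hd.card_isSimpleOff_le l))) ?_
      push_cast
      rfl
    · exact absurd hx (inr_notMem_outPoints e)
  have hinv : ∀ (σ : GadgetLeft dp ≃ GadgetRight dm) (l x : GadgetLeft dp), x ∉ outPoints dp →
      x ≠ l → IsNearPerfect gadgetAdj σ l → gadgetAdj x (σ l) →
        repairExtension f (exchange σ l x) l = repairExtension f σ l := by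
    rintro σ l (a | e) hx hne hσ hadj
    · exact absurd (inl_mem_outPoints a) hx
    · exact repairExtension_exchange_inr f hne hσ hadj
  calc _ ≤ _ := sum_isSimple_sq_sub_le f
    _ ≤ (outPoints dp).card * ((n ^ 2 + 1) * (m * N)) *
          ∑ t with IsSlide gadgetAdj (outPoints dp) t,
            slideIncrement (repairExtension f) t ^ 2 :=
        matching_poincare gadgetRank_injective gadgetRank_lt
          (fun σ hσ x => repairExtension_of_isPerfect f hσ x) hinv hcard
    _ ≤ m * ((n ^ 2 + 1) * (m * N)) *
          (27 * m ^ 3 * ∑ ψ : Points dp ≃ Points dm, localEnergy f ψ) := by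
        rw [card_outPoints]
        gcongr
        exact (sum_slideIncrement_sq_le f).trans (hd.sum_repairIncrementSq_le f)
    _ = 27 * (n ^ 2 + 1) * m ^ 5 * N * ∑ ψ : Points dp ≃ Points dm, localEnergy f ψ := by ring

end PairingPoincare

/-! ### From simple pairings to digraphs -/

section Fibres

variable {dm dp : Fin n → ℕ} {G : Set (Fin n × Fin n)} {φ : Points dp ≃ Points dm}
  {a b : Points dp}

/-- An arc seen from its tail, and the same arc seen from its head. -/
def tailHeadEquiv (G : Set (Fin n × Fin n)) :
    (Σ u : Fin n, {w // (u, w) ∈ G}) ≃ (Σ v : Fin n, {u // (u, v) ∈ G}) where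
  toFun x := ⟨x.2.1, ⟨x.1, x.2.2⟩⟩
  invFun x := ⟨x.2.1, ⟨x.1, x.2.2⟩⟩

/-- Labellings, at each vertex of `G`, of the out-arcs by out-points and of the in-arcs by
in-points. -/
abbrev Labelling (dm dp : Fin n → ℕ) (G : Set (Fin n × Fin n)) : Type :=
  (∀ u, Fin (dp u) ≃ {w // (u, w) ∈ G}) × (∀ v, {u // (u, v) ∈ G} ≃ Fin (dm v))

/-- The pairing with arc set `G` given by a labelling of `G`. -/
def labellingPairing (x : Labelling dm dp G) : Points dp ≃ Points dm :=
  (Equiv.sigmaCongrRight x.1).trans ((tailHeadEquiv G).trans (Equiv.sigmaCongrRight x.2))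

lemma arc_labellingPairing (x : Labelling dm dp G) (u : Fin n) (p : Fin (dp u)) :
    arc (labellingPairing x) ⟨u, p⟩ = (u, (x.1 u p).1) := rfl

lemma labellingPairing_injective :
    Function.Injective (labellingPairing : Labelling dm dp G → (Points dp ≃ Points dm)) := by
  rintro ⟨α, β⟩ ⟨α', β'⟩ h
  obtain rfl : α = α' := by
    funext u
    ext p
    exact congrArg Fin.val (congrArg (fun φ => (arc φ ⟨u, p⟩).2) h)
  congr 1
  funext v
  ext1 ⟨u, hu⟩
  simpa [labellingPairing, tailHeadEquiv, Equiv.sigmaCongrRight] using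
    congrArg (fun φ => φ ⟨u, (α u).symm ⟨v, hu⟩⟩) h

lemma isSimple_labellingPairing (hG : ∀ e ∈ G, e.1 ≠ e.2) (x : Labelling dm dp G) :
    IsSimple (labellingPairing x) := by
  refine ⟨fun ⟨u, p⟩ => hG _ (x.1 u p).2, ?_⟩
  rintro ⟨u, p⟩ ⟨u', p'⟩ h
  rw [arc_labellingPairing, arc_labellingPairing, Prod.mk.injEq] at h
  obtain ⟨rfl, h⟩ := h
  rw [(x.1 u).injective (Subtype.ext h)]

lemma arcs_labellingPairing (x : Labelling dm dp G) : arcs (labellingPairing x) = G := by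
  ext ⟨u, w⟩
  constructor
  · rintro ⟨⟨u', p⟩, h⟩
    exact h ▸ (x.1 u' p).2
  · intro h
    exact ⟨⟨u, (x.1 u).symm ⟨w, h⟩⟩, by rw [arc_labellingPairing, Equiv.apply_symm_apply]⟩

/-- The labelling of the out-arcs of `u` given by a simple pairing. -/
def IsSimple.outLabelling (h : IsSimple φ) (u : Fin n) :
    Fin (dp u) ≃ {w // (u, w) ∈ arcs φ} :=
  Equiv.ofBijective (fun p => ⟨(φ ⟨u, p⟩).1, ⟨u, p⟩, rfl⟩) <| by
    constructor
    · intro p p' hp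
      simpa using h.2 (a₁ := ⟨u, p⟩) (a₂ := ⟨u, p'⟩) (Prod.ext rfl (congrArg Subtype.val hp))
    · rintro ⟨w, ⟨u', p⟩, hp⟩
      obtain ⟨rfl, rfl⟩ := Prod.mk.inj hp
      exact ⟨p, rfl⟩

/-- The labelling of the in-arcs of `v` given by a simple pairing. -/
def IsSimple.inLabelling (h : IsSimple φ) (v : Fin n) :
    {u // (u, v) ∈ arcs φ} ≃ Fin (dm v) :=
  (Equiv.ofBijective (fun q : Fin (dm v) => (⟨(φ.symm ⟨v, q⟩).1, φ.symm ⟨v, q⟩,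
      by rw [arc, Equiv.apply_symm_apply]⟩ : {u // (u, v) ∈ arcs φ})) <| by
    constructor
    · intro q q' hq
      have harc : arc φ (φ.symm ⟨v, q⟩) = arc φ (φ.symm ⟨v, q'⟩) := by
        have htail : (φ.symm ⟨v, q⟩).1 = (φ.symm ⟨v, q'⟩).1 := congrArg Subtype.val hq
        simp only [arc, htail, Equiv.apply_symm_apply]
      simpa using h.2 harc
    · rintro ⟨u, a, ha⟩
      obtain ⟨rfl, rfl⟩ := Prod.mk.inj ha
      exact ⟨(φ a).2, by simp⟩).symm

lemma IsSimple.labellingPairing_eq (h : IsSimple φ) :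
    labellingPairing (h.outLabelling, h.inLabelling) = φ := by
  ext1 ⟨u, p⟩
  have hin : h.inLabelling (φ ⟨u, p⟩).1 ⟨u, ⟨u, p⟩, rfl⟩ = (φ ⟨u, p⟩).2 := by
    rw [inLabelling, Equiv.symm_apply_eq]
    exact Subtype.ext (congrArg Sigma.fst (φ.symm_apply_apply ⟨u, p⟩)).symm
  exact Sigma.ext rfl (heq_of_eq hin)

lemma IsSimple.arcs_mem_Omega (h : IsSimple φ) : arcs φ ∈ Omega dm dp := by
  refine ⟨?_, fun j => ?_, fun j => ?_⟩
  · rintro _ ⟨a, rfl⟩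
    exact h.1 a
  · rw [← Nat.card_coe_set_eq]
    exact (Nat.card_congr (h.outLabelling j)).symm.trans (Nat.card_fin _)
  · rw [← Nat.card_coe_set_eq]
    exact (Nat.card_congr (h.inLabelling j)).trans (Nat.card_fin _)

/-- The number of labellings of a digraph with the given degrees. -/
def numLabellings (dm dp : Fin n → ℕ) : ℕ :=
  (∏ u, (dp u).factorial) * ∏ v, (dm v).factorial

lemma numLabellings_pos : 0 < numLabellings dm dp :=
  Nat.mul_pos (Finset.prod_pos fun _ _ => Nat.factorial_pos _)
    (Finset.prod_pos fun _ _ => Nat.factorial_pos _)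

lemma card_labelling (hG : G ∈ Omega dm dp) :
    Fintype.card (Labelling dm dp G) = numLabellings dm dp := by
  have hout (u : Fin n) : Fintype.card {w // (u, w) ∈ G} = dp u := by
    rw [← hG.2.1 u, ← Nat.card_coe_set_eq, Nat.card_eq_fintype_card]
    rfl
  have hin (v : Fin n) : Fintype.card {u // (u, v) ∈ G} = dm v := by
    rw [← hG.2.2 v, ← Nat.card_coe_set_eq, Nat.card_eq_fintype_card]
    rfl
  rw [Fintype.card_prod, Fintype.card_pi, Fintype.card_pi, numLabellings]
  congr 1
  · refine Finset.prod_congr rfl fun u _ => ?_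
    rw [Fintype.card_equiv (Fintype.equivOfCardEq ((Fintype.card_fin _).trans (hout u).symm)),
      Fintype.card_fin]
  · refine Finset.prod_congr rfl fun v _ => ?_
    rw [Fintype.card_equiv (Fintype.equivOfCardEq ((hin v).trans (Fintype.card_fin _).symm)), hin]

lemma card_isSimple_arcs_eq (hG : G ∈ Omega dm dp) :
    (Finset.univ.filter fun φ : Points dp ≃ Points dm => IsSimple φ ∧ arcs φ = G).card =
      numLabellings dm dp := by
  have himage : (Finset.univ.filter fun φ : Points dp ≃ Points dm => IsSimple φ ∧ arcs φ = G) =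
      Finset.univ.image (labellingPairing : Labelling dm dp G → _) := by
    ext φ
    rw [Finset.mem_filter_univ, Finset.mem_image]
    simp only [Finset.mem_univ, true_and]
    constructor
    · rintro ⟨h, rfl⟩
      exact ⟨_, h.labellingPairing_eq⟩
    · rintro ⟨x, rfl⟩
      exact ⟨isSimple_labellingPairing hG.1 x, arcs_labellingPairing x⟩
  rw [himage, Finset.card_image_of_injective _ labellingPairing_injective, Finset.card_univ,
    card_labelling hG]

lemma sum_isSimple (F : Set (Fin n × Fin n) → ℝ) :
    ∑ φ : Points dp ≃ Points dm with IsSimple φ, F (arcs φ) =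
      numLabellings dm dp * ∑ G : OmegaType dm dp, F G.1 := by
  have hmaps : ∀ φ ∈ Finset.univ.filter (IsSimple (dm := dm) (dp := dp)),
      arcs φ ∈ Finset.univ.image (Subtype.val : OmegaType dm dp → _) := fun φ hφ =>
    Finset.mem_image_of_mem Subtype.val
      (Finset.mem_univ ⟨_, ((Finset.mem_filter_univ φ).1 hφ).arcs_mem_Omega⟩)
  rw [← Finset.sum_fiberwise_of_maps_to hmaps, Finset.sum_image Subtype.val_injective.injOn,
    Finset.mul_sum]
  refine Finset.sum_congr rfl fun G _ => ?_
  rw [Finset.filter_filter,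
    Finset.sum_congr rfl fun φ hφ => congrArg F (Finset.mem_filter.1 hφ).2.2, Finset.sum_const,
    card_isSimple_arcs_eq G.2, nsmul_eq_mul]

lemma card_isSimple :
    (Finset.univ.filter fun φ : Points dp ≃ Points dm => IsSimple φ).card =
      numLabellings dm dp * Fintype.card (OmegaType dm dp) := by
  have hsum := sum_isSimple (dm := dm) (dp := dp) fun _ => 1
  simp only [Finset.sum_const, Finset.card_univ, nsmul_eq_mul, mul_one] at hsum
  exact_mod_cast hsum

lemma card_omegaType_le_factorial (dm dp : Fin n → ℕ) :
    Fintype.card (OmegaType dm dp) ≤ (Fintype.card (Points dp)).factorial := by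
  calc Fintype.card (OmegaType dm dp)
      ≤ numLabellings dm dp * Fintype.card (OmegaType dm dp) :=
        Nat.le_mul_of_pos_left _ numLabellings_pos
    _ = (Finset.univ.filter fun φ : Points dp ≃ Points dm => IsSimple φ).card :=
        card_isSimple.symm
    _ ≤ Fintype.card (Points dp ≃ Points dm) := Finset.card_le_univ _
    _ ≤ (Fintype.card (Points dp)).factorial := by
        rcases isEmpty_or_nonempty (Points dp ≃ Points dm) with _ | ⟨⟨φ⟩⟩
        · rw [Fintype.card_eq_zero]
          exact Nat.zero_le _
        · exact (Fintype.card_equiv φ).le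

end Fibres

section SwitchPoincare

variable {dm dp : Fin n → ℕ} {φ : Points dp ≃ Points dm} {a b : Points dp}

lemma IsSimple.arcs_exchange (h : IsSimple φ) (a b : Points dp) :
    arcs (exchange φ a b) = (arcs φ \ {arc φ a, arc φ b}) ∪ {(a.1, (φ b).1), (b.1, (φ a).1)} := by
  rw [DirectedSwitchChain.arcs_exchange, Set.union_comm, arcsOff, ← Set.range_sdiff_image h.2,
    Set.image_pair, arcs]

lemma IsSimple.arc_exchange_notMem (h : IsSimple (exchange φ a b)) (htail : a.1 ≠ b.1)
    (hhead : (φ a).1 ≠ (φ b).1) : (a.1, (φ b).1) ∉ arcs φ := by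
  rintro ⟨c, hc⟩
  have hca : c ≠ a := by
    rintro rfl
    exact hhead (Prod.mk.inj hc).2
  have hcb : c ≠ b := by
    rintro rfl
    exact htail (Prod.mk.inj hc).1.symm
  exact hca (h.2 (by rw [arc, arc, exchange_of_ne φ hca hcb, exchange_left]; exact hc))

lemma IsSimple.arcs_exchange_eq_or_dSwitch (h : IsSimple φ) (h' : IsSimple (exchange φ a b)) :
    arcs (exchange φ a b) = arcs φ ∨ DSwitch (arcs φ) (arcs (exchange φ a b)) := by
  have hab : {arc φ a, arc φ b} ⊆ arcs φ :=
    Set.insert_subset ⟨a, rfl⟩ (Set.singleton_subset_iff.2 ⟨b, rfl⟩)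
  by_cases htail : a.1 = b.1
  · left
    have hpair : {(a.1, (φ b).1), (b.1, (φ a).1)} = ({arc φ a, arc φ b} : Set _) := by
      rw [Set.pair_comm, arc, arc, htail]
    rw [h.arcs_exchange, hpair, Set.sdiff_union_of_subset hab]
  by_cases hhead : (φ a).1 = (φ b).1
  · left
    have hpair : {(a.1, (φ b).1), (b.1, (φ a).1)} = ({arc φ a, arc φ b} : Set _) := by
      rw [arc, arc, hhead]
    rw [h.arcs_exchange, hpair, Set.sdiff_union_of_subset hab]
  have hloop : a.1 ≠ (φ b).1 := by simpa only [exchange_left] using h'.1 a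
  have hloop' : b.1 ≠ (φ a).1 := by simpa only [exchange_right] using h'.1 b
  exact .inr ⟨a.1, (φ a).1, b.1, (φ b).1, h.1 a, htail, hloop, hloop'.symm, hhead, h.1 b,
    ⟨a, rfl⟩, ⟨b, rfl⟩, h'.arc_exchange_notMem htail hhead,
    (exchange_comm φ a b ▸ h').arc_exchange_notMem (Ne.symm htail) (Ne.symm hhead),
    h.arcs_exchange a b⟩

/-- The contribution of `A` to the Dirichlet form of `f` for the switches of digraphs. -/
def switchEnergy (dm dp : Fin n → ℕ) (f : Set (Fin n × Fin n) → ℝ)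
    (A : Set (Fin n × Fin n)) : ℝ :=
  ∑ B : OmegaType dm dp, if DSwitch A B.1 then (f A - f B.1) ^ 2 else 0

variable (f : Set (Fin n × Fin n) → ℝ)

lemma IsSimple.sq_sub_exchange_le (h : IsSimple φ) (h' : IsSimple (exchange φ a b)) :
    (f (arcs φ) - f (arcs (exchange φ a b))) ^ 2 ≤ switchEnergy dm dp f (arcs φ) := by
  have hnonneg (B : OmegaType dm dp) :
      0 ≤ if DSwitch (arcs φ) B.1 then (f (arcs φ) - f B.1) ^ 2 else 0 := by
    split_ifs <;> positivity
  rcases h.arcs_exchange_eq_or_dSwitch h' with heq | hswitch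
  · rw [heq, sub_self, zero_pow two_ne_zero]
    exact Finset.sum_nonneg fun B _ => hnonneg B
  · have hsingle := Finset.single_le_sum (fun B _ => hnonneg B)
      (Finset.mem_univ (⟨_, h'.arcs_mem_Omega⟩ : OmegaType dm dp))
    rwa [if_pos hswitch] at hsingle

lemma IsSimple.localEnergy_le (h : IsSimple φ) :
    localEnergy f φ ≤ (Fintype.card (Points dp) : ℝ) ^ 2 * switchEnergy dm dp f (arcs φ) := by
  have hnonneg : 0 ≤ switchEnergy dm dp f (arcs φ) :=
    Finset.sum_nonneg fun B _ => by split_ifs <;> positivity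
  calc localEnergy f φ
      ≤ ∑ _p : Points dp, ∑ _q : Points dp, switchEnergy dm dp f (arcs φ) := by
        refine Finset.sum_le_sum fun p _ => Finset.sum_le_sum fun q _ => ?_
        split_ifs with hpq
        exacts [h.sq_sub_exchange_le f hpq.2, hnonneg]
    _ = _ := by
        simp only [Finset.sum_const, Finset.card_univ, nsmul_eq_mul]
        ring

lemma sum_localEnergy_le :
    ∑ φ : Points dp ≃ Points dm, localEnergy f φ ≤ (Fintype.card (Points dp) : ℝ) ^ 2 *
      (numLabellings dm dp * ∑ A : OmegaType dm dp, switchEnergy dm dp f A.1) := by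
  have hzero : ∀ φ : Points dp ≃ Points dm, ¬ IsSimple φ → localEnergy f φ = 0 := by
    intro φ hφ
    simp only [localEnergy, hφ, false_and, if_false, Finset.sum_const_zero]
  rw [← sum_isSimple, Finset.mul_sum, ← Finset.sum_filter_add_sum_filter_not _ IsSimple,
    Finset.sum_eq_zero fun φ hφ => hzero φ (Finset.mem_filter.1 hφ).2, add_zero]
  exact Finset.sum_le_sum fun φ hφ => ((Finset.mem_filter_univ φ).1 hφ).localEnergy_le f

theorem IsSparse.switch_poincare (hd : IsSparse dm dp) :
    ∑ A : OmegaType dm dp, ∑ B : OmegaType dm dp, (f A.1 - f B.1) ^ 2 ≤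
      27 * (n ^ 2 + 1) * (Fintype.card (Points dp) : ℝ) ^ 7 * Fintype.card (OmegaType dm dp) *
        ∑ A : OmegaType dm dp, switchEnergy dm dp f A.1 := by
  set m : ℝ := (Fintype.card (Points dp) : ℝ)
  set k : ℝ := (numLabellings dm dp : ℝ)
  set E : ℝ := ∑ A : OmegaType dm dp, switchEnergy dm dp f A.1
  have hk : 0 < k := Nat.cast_pos.2 numLabellings_pos
  have hpairs : ∑ φ : Points dp ≃ Points dm with IsSimple φ,
      ∑ φ' : Points dp ≃ Points dm with IsSimple φ', (f (arcs φ) - f (arcs φ')) ^ 2 =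
      k ^ 2 * ∑ A : OmegaType dm dp, ∑ B : OmegaType dm dp, (f A.1 - f B.1) ^ 2 := by
    rw [Finset.sum_congr rfl fun φ _ => sum_isSimple fun A => (f (arcs φ) - f A) ^ 2,
      ← Finset.mul_sum, sum_isSimple fun A => ∑ B : OmegaType dm dp, (f A - f B.1) ^ 2, pow_two,
      mul_assoc]
  refine le_of_mul_le_mul_left ?_ (pow_pos hk 2)
  calc k ^ 2 * ∑ A : OmegaType dm dp, ∑ B : OmegaType dm dp, (f A.1 - f B.1) ^ 2
      ≤ 27 * (n ^ 2 + 1) * m ^ 5 *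
          (Finset.univ.filter fun φ : Points dp ≃ Points dm => IsSimple φ).card *
          ∑ φ : Points dp ≃ Points dm, localEnergy f φ := hpairs ▸ hd.pairing_poincare f
    _ ≤ 27 * (n ^ 2 + 1) * m ^ 5 * (k * Fintype.card (OmegaType dm dp)) *
          (m ^ 2 * (k * E)) := by
        rw [card_isSimple, Nat.cast_mul]
        gcongr
        exact sum_localEnergy_le f
    _ = k ^ 2 * (27 * (n ^ 2 + 1) * m ^ 7 * Fintype.card (OmegaType dm dp) * E) := by ring

end SwitchPoincare

/-! ### Mixing from a spectral gap -/

section Spectral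

open scoped Matrix

variable {Ω : Type*} [Fintype Ω] {P : Matrix Ω Ω ℝ}

lemma isSymm_dotProduct_mulVec_comm (hsymm : P.IsSymm) (g h : Ω → ℝ) :
    g ⬝ᵥ P *ᵥ h = P *ᵥ g ⬝ᵥ h := by
  rw [Matrix.dotProduct_mulVec, ← Matrix.mulVec_transpose, hsymm.eq]

lemma sum_mulVec (hsymm : P.IsSymm) (hP : P ∈ Matrix.rowStochastic ℝ Ω) (g : Ω → ℝ) :
    ∑ x, (P *ᵥ g) x = ∑ x, g x := by
  rw [← one_dotProduct, isSymm_dotProduct_mulVec_comm hsymm,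
    Matrix.one_vecMul_of_mem_rowStochastic hP, one_dotProduct]

lemma sum_mul_add_sq (hsymm : P.IsSymm) (hP : P ∈ Matrix.rowStochastic ℝ Ω) (g : Ω → ℝ) {s : ℝ}
    (hs : s ^ 2 = 1) :
    ∑ x, ∑ y, P x y * (g x + s * g y) ^ 2 = 2 * (g ⬝ᵥ g + s * (g ⬝ᵥ P *ᵥ g)) := by
  have htail : ∑ x, ∑ y, P x y * g x ^ 2 = g ⬝ᵥ g := by
    refine Finset.sum_congr rfl fun x _ => ?_
    rw [← Finset.sum_mul, Matrix.sum_row_of_mem_rowStochastic hP, one_mul, pow_two]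
  have hhead : ∑ x, ∑ y, P x y * g y ^ 2 = g ⬝ᵥ g := by
    rw [Finset.sum_comm, ← htail]
    simp only [hsymm.apply]
  have hcross : g ⬝ᵥ P *ᵥ g = ∑ x, ∑ y, P x y * (g x * g y) := by
    simp only [dotProduct, Matrix.mulVec, Finset.mul_sum, mul_left_comm]
  calc ∑ x, ∑ y, P x y * (g x + s * g y) ^ 2
      = ∑ x, ∑ y, (P x y * g x ^ 2 + s ^ 2 * (P x y * g y ^ 2) +
          2 * s * (P x y * (g x * g y))) := by
        refine Finset.sum_congr rfl fun x _ => Finset.sum_congr rfl fun y _ => ?_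
        ring
    _ = 2 * (g ⬝ᵥ g + s * (g ⬝ᵥ P *ᵥ g)) := by
        simp only [Finset.sum_add_distrib, ← Finset.mul_sum]
        rw [htail, hhead, ← hcross, hs]
        ring

lemma abs_dotProduct_mulVec_le_of_gap (hsymm : P.IsSymm) (hP : P ∈ Matrix.rowStochastic ℝ Ω)
    {B : ℝ} (hB : 0 < B) (hdiag : ∀ x, 1 ≤ 2 * B * P x x) {g : Ω → ℝ}
    (hgap : g ⬝ᵥ g ≤ B * (g ⬝ᵥ g - g ⬝ᵥ P *ᵥ g)) :
    |g ⬝ᵥ P *ᵥ g| ≤ (1 - 1 / B) * (g ⬝ᵥ g) := by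
  have hhold : g ⬝ᵥ g ≤ B * (g ⬝ᵥ g + g ⬝ᵥ P *ᵥ g) := by
    have hterm (x : Ω) : 2 * (g x * g x) ≤ B * ∑ y, P x y * (g x + 1 * g y) ^ 2 := by
      have hsingle : P x x * (g x + 1 * g x) ^ 2 ≤ ∑ y, P x y * (g x + 1 * g y) ^ 2 :=
        Finset.single_le_sum (f := fun y => P x y * (g x + 1 * g y) ^ 2)
          (fun y _ => mul_nonneg (Matrix.nonneg_of_mem_rowStochastic hP) (sq_nonneg _))
          (Finset.mem_univ x)
      nlinarith [mul_le_mul_of_nonneg_left hsingle hB.le,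
        mul_le_mul_of_nonneg_right (hdiag x) (sq_nonneg (g x))]
    have hsum := Finset.sum_le_sum fun x (_ : x ∈ Finset.univ) => hterm x
    rw [← Finset.mul_sum, ← Finset.mul_sum, sum_mul_add_sq hsymm hP g (one_pow 2), one_mul] at hsum
    change 2 * (g ⬝ᵥ g) ≤ _ at hsum
    linarith
  have hscale : (1 - 1 / B) * (g ⬝ᵥ g) = (B * (g ⬝ᵥ g) - g ⬝ᵥ g) / B := by field_simp
  rw [hscale, le_div_iff₀ hB, ← abs_of_pos hB, ← abs_mul, abs_of_pos hB, abs_le]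
  constructor <;> linarith

/-- Polarisation: `4c‖Pg‖²` is the difference of the quadratic forms of `c g + P g` and
`c g - P g`, both of which have mean zero. -/
lemma mulVec_dotProduct_mulVec_le (hsymm : P.IsSymm) (hP : P ∈ Matrix.rowStochastic ℝ Ω) {c : ℝ}
    (hc : 0 < c) (hform : ∀ g : Ω → ℝ, ∑ x, g x = 0 → |g ⬝ᵥ P *ᵥ g| ≤ c * (g ⬝ᵥ g))
    {g : Ω → ℝ} (hg : ∑ x, g x = 0) :
    P *ᵥ g ⬝ᵥ P *ᵥ g ≤ c ^ 2 * (g ⬝ᵥ g) := by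
  have hh : ∑ x, (P *ᵥ g) x = 0 := (sum_mulVec hsymm hP g).trans hg
  set h : Ω → ℝ := P *ᵥ g with hdef
  have hadd := (abs_le.1 <| hform (c • g + h) <| by
    simp only [Pi.add_apply, Pi.smul_apply, smul_eq_mul, Finset.sum_add_distrib, ← Finset.mul_sum,
      hg, hh, mul_zero, add_zero]).2
  have hsub := (abs_le.1 <| hform (c • g - h) <| by
    simp only [Pi.sub_apply, Pi.smul_apply, smul_eq_mul, Finset.sum_sub_distrib, ← Finset.mul_sum,
      hg, hh, mul_zero, sub_zero]).1
  have hcomm : g ⬝ᵥ P *ᵥ h = h ⬝ᵥ h := isSymm_dotProduct_mulVec_comm hsymm g h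
  simp only [Matrix.mulVec_add, Matrix.mulVec_sub, Matrix.mulVec_smul, ← hdef, dotProduct_add,
    dotProduct_sub, add_dotProduct, sub_dotProduct, smul_dotProduct, dotProduct_smul, smul_eq_mul,
    hcomm, dotProduct_comm h g] at hadd hsub
  refine le_of_mul_le_mul_left ?_ (mul_pos two_pos hc)
  linarith

/-- The deviation from uniformity of the chain with transition matrix `P`, started at `x`, after
`t` steps. -/
def deviation (P : Matrix Ω Ω ℝ) (x : Ω) (t : ℕ) : Ω → ℝ :=
  fun y => (P ^ t) x y - (Fintype.card Ω : ℝ)⁻¹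

lemma sum_deviation_zero (x : Ω) : ∑ y, deviation P x 0 y = 0 := by
  have hcard : (Fintype.card Ω : ℝ) ≠ 0 := Nat.cast_ne_zero.2 (Fintype.card_pos_iff.2 ⟨x⟩).ne'
  simp only [deviation, pow_zero, Matrix.one_apply, Finset.sum_sub_distrib, Finset.sum_ite_eq,
    Finset.mem_univ, if_true, Finset.sum_const, Finset.card_univ, nsmul_eq_mul,
    mul_inv_cancel₀ hcard, sub_self]

lemma deviation_zero_dotProduct_self_le (x : Ω) : deviation P x 0 ⬝ᵥ deviation P x 0 ≤ 1 := by
  calc deviation P x 0 ⬝ᵥ deviation P x 0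
      = ∑ y, ((1 : Matrix Ω Ω ℝ) x y * deviation P x 0 y -
          (Fintype.card Ω : ℝ)⁻¹ * deviation P x 0 y) := by
        simp only [dotProduct, ← sub_mul, deviation, pow_zero]
    _ = deviation P x 0 x := by
        simp only [Finset.sum_sub_distrib, ← Finset.mul_sum, sum_deviation_zero, Matrix.one_apply,
          ite_mul, one_mul, zero_mul, Finset.sum_ite_eq, Finset.mem_univ, if_true, mul_zero,
          sub_zero]
    _ = 1 - (Fintype.card Ω : ℝ)⁻¹ := by rw [deviation, pow_zero, Matrix.one_apply_eq]
    _ ≤ 1 := sub_le_self _ (by positivity)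

lemma deviation_succ (hsymm : P.IsSymm) (hP : P ∈ Matrix.rowStochastic ℝ Ω) (x : Ω) (t : ℕ) :
    deviation P x (t + 1) = P *ᵥ deviation P x t := by
  funext y
  have hstep : (P ^ (t + 1)) x y = ∑ z, P y z * (P ^ t) x z := by
    rw [pow_succ, Matrix.mul_apply]
    exact Finset.sum_congr rfl fun z _ => by rw [hsymm.apply, mul_comm]
  simp only [deviation, Matrix.mulVec, dotProduct, mul_sub, Finset.sum_sub_distrib,
    ← Finset.sum_mul, Matrix.sum_row_of_mem_rowStochastic hP, one_mul, hstep]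

lemma deviation_dotProduct_self_le (hsymm : P.IsSymm) (hP : P ∈ Matrix.rowStochastic ℝ Ω) {c : ℝ}
    (hc : 0 < c) (hform : ∀ g : Ω → ℝ, ∑ x, g x = 0 → |g ⬝ᵥ P *ᵥ g| ≤ c * (g ⬝ᵥ g))
    (x : Ω) (t : ℕ) : deviation P x t ⬝ᵥ deviation P x t ≤ (c ^ 2) ^ t := by
  have hmean (s : ℕ) : ∑ y, deviation P x s y = 0 := by
    induction s with
    | zero => exact sum_deviation_zero x
    | succ s ih => rw [deviation_succ hsymm hP, sum_mulVec hsymm hP, ih]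
  induction t with
  | zero => exact deviation_zero_dotProduct_self_le x
  | succ t ih =>
    rw [deviation_succ hsymm hP, pow_succ']
    exact (mulVec_dotProduct_mulVec_le hsymm hP hc hform (hmean t)).trans
      (mul_le_mul_of_nonneg_left ih (sq_nonneg c))

lemma dTV_uniform_sq_le (x : Ω) (t : ℕ) :
    (2 * dTV (fun y => (P ^ t) x y) fun _ => (Fintype.card Ω : ℝ)⁻¹) ^ 2 ≤
      Fintype.card Ω * (deviation P x t ⬝ᵥ deviation P x t) := by
  have hcauchy := sq_sum_le_card_mul_sum_sq (s := (Finset.univ : Finset Ω))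
    (f := fun y => |deviation P x t y|)
  rw [dTV, ← mul_assoc, mul_one_div_cancel two_ne_zero, one_mul]
  refine hcauchy.trans_eq ?_
  simp only [sq_abs]
  simp only [pow_two, dotProduct, Finset.card_univ]

lemma card_mul_pow_le_of_time_le {N : ℝ} (hN : 0 < N) {B : ℝ} (hB : 1 ≤ B) {ε : ℝ} (hε : 0 < ε)
    {t : ℕ} (ht : B * (Real.log N / 2 + Real.log ε⁻¹) ≤ t + 1 / 2 * B) :
    N * ((1 - 1 / B) ^ 2) ^ t ≤ (2 * ε) ^ 2 := by
  have hBpos : 0 < B := one_pos.trans_le hB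
  have hnonneg : 0 ≤ 1 - 1 / B := sub_nonneg.2 ((div_le_one hBpos).2 hB)
  have hexp : 1 - 1 / B ≤ Real.exp (-(1 / B)) := Real.one_sub_le_exp_neg _
  have htime : Real.log N - 2 * t / B ≤ 1 + 2 * Real.log ε := by
    rw [Real.log_inv] at ht
    have hdiv : Real.log N - 2 * t / B = 2 * (B * (Real.log N / 2) - t) / B := by field_simp
    rw [hdiv, div_le_iff₀ hBpos]
    linarith
  calc N * ((1 - 1 / B) ^ 2) ^ t
      ≤ Real.exp (Real.log N) * (Real.exp (-(1 / B)) ^ 2) ^ t := by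
        rw [Real.exp_log hN]
        gcongr
    _ = Real.exp (Real.log N - 2 * t / B) := by
        rw [← pow_mul, ← Real.exp_nat_mul, ← Real.exp_add]
        push_cast
        ring_nf
    _ ≤ Real.exp (1 + 2 * Real.log ε) := Real.exp_le_exp.2 htime
    _ = Real.exp 1 * ε ^ 2 := by
        rw [Real.exp_add, two_mul, Real.exp_add, Real.exp_log hε, pow_two]
    _ ≤ (2 * ε) ^ 2 := by nlinarith [Real.exp_one_lt_d9, sq_nonneg ε]

theorem mixingTime_uniform_le (hsymm : P.IsSymm) (hP : P ∈ Matrix.rowStochastic ℝ Ω) {B : ℝ}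
    (hB : 2 ≤ B) (hdiag : ∀ x, 1 ≤ 2 * B * P x x)
    (hgap : ∀ g : Ω → ℝ, ∑ x, g x = 0 → g ⬝ᵥ g ≤ B * (g ⬝ᵥ g - g ⬝ᵥ P *ᵥ g))
    {ε : ℝ} (hε₀ : 0 < ε) (hε₁ : ε ≤ 1) :
    (mixingTime P (fun _ => (Fintype.card Ω : ℝ)⁻¹) ε : ℝ) ≤
      B * (Real.log (Fintype.card Ω) / 2 + Real.log ε⁻¹) := by
  have hBpos : 0 < B := two_pos.trans_le hB
  have hc : 0 < 1 - 1 / B := by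
    rw [sub_pos, div_lt_one hBpos]
    linarith
  have hbound : 0 ≤ B * (Real.log (Fintype.card Ω) / 2 + Real.log ε⁻¹) :=
    mul_nonneg hBpos.le (add_nonneg (div_nonneg (Real.log_natCast_nonneg _) two_pos.le)
      (Real.log_nonneg ((one_le_inv₀ hε₀).2 hε₁)))
  refine (Nat.cast_le.2 ?_).trans (Nat.floor_le hbound)
  refine Finset.sup_le fun x _ => Nat.sInf_le fun t ht => ?_
  have htime : B * (Real.log (Fintype.card Ω) / 2 + Real.log ε⁻¹) ≤ t + 1 / 2 * B := by
    have hfloor := Nat.lt_floor_add_one (B * (Real.log (Fintype.card Ω) / 2 + Real.log ε⁻¹))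
    have ht' := (Nat.cast_le (α := ℝ)).2 ht
    linarith
  have hcard : (0 : ℝ) < Fintype.card Ω := Nat.cast_pos.2 (Fintype.card_pos_iff.2 ⟨x⟩)
  have hdev := deviation_dotProduct_self_le hsymm hP hc
    (fun g hg => abs_dotProduct_mulVec_le_of_gap hsymm hP hBpos hdiag (hgap g hg)) x t
  refine le_of_mul_le_mul_left (abs_le_of_sq_le_sq' ?_ (by positivity)).2 two_pos
  calc (2 * dTV (fun y => (P ^ t) x y) fun _ => (Fintype.card Ω : ℝ)⁻¹) ^ 2
      ≤ Fintype.card Ω * (deviation P x t ⬝ᵥ deviation P x t) := dTV_uniform_sq_le x t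
    _ ≤ Fintype.card Ω * ((1 - 1 / B) ^ 2) ^ t := mul_le_mul_of_nonneg_left hdev hcard.le
    _ ≤ (2 * ε) ^ 2 := card_mul_pow_le_of_time_le hcard (one_le_two.trans hB) hε₀ htime

end Spectral

/-! ### The directed switch chain -/

section SwitchPairs

variable {A B B' S : Set (Fin n × Fin n)}

/-- `S` is a pair of arcs of `A` whose switch is accepted and turns `A` into `B`, as counted by
`dSwitchCount`. -/
def IsSwitchPair (A B S : Set (Fin n × Fin n)) : Prop :=
  ∃ i j k l : Fin n,
    i ≠ j ∧ i ≠ k ∧ i ≠ l ∧ j ≠ k ∧ j ≠ l ∧ k ≠ l ∧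
    S = {(i, j), (k, l)} ∧
    (i, j) ∈ A ∧ (k, l) ∈ A ∧ (i, l) ∉ A ∧ (k, j) ∉ A ∧
    B = (A \ S) ∪ {(i, l), (k, j)}

lemma dSwitch_iff_exists_isSwitchPair : DSwitch A B ↔ ∃ S, IsSwitchPair A B S := by
  constructor
  · rintro ⟨i, j, k, l, hij, hik, hil, hjk, hjl, hkl, hA, hA', hnot, hnot', hB⟩
    exact ⟨_, i, j, k, l, hij, hik, hil, hjk, hjl, hkl, rfl, hA, hA', hnot, hnot', hB⟩
  · rintro ⟨_, i, j, k, l, hij, hik, hil, hjk, hjl, hkl, rfl, hA, hA', hnot, hnot', hB⟩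
    exact ⟨i, j, k, l, hij, hik, hil, hjk, hjl, hkl, hA, hA', hnot, hnot', hB⟩

lemma IsSwitchPair.subset (h : IsSwitchPair A B S) : S ⊆ A := by
  obtain ⟨i, j, k, l, -, -, -, -, -, -, rfl, hA, hA', -⟩ := h
  exact Set.pair_subset_iff.2 ⟨hA, hA'⟩

lemma IsSwitchPair.ncard_eq_two (h : IsSwitchPair A B S) : S.ncard = 2 := by
  obtain ⟨i, j, k, l, -, hik, -, -, -, -, rfl, -⟩ := h
  exact Set.ncard_pair fun h => hik (Prod.mk.inj h).1

lemma IsSwitchPair.injOn_fst (h : IsSwitchPair A B S) : S.InjOn Prod.fst := by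
  obtain ⟨i, j, k, l, -, hik, -, -, -, -, rfl, -⟩ := h
  exact Set.injOn_pair.2 fun h => absurd h hik

lemma IsSwitchPair.injOn_snd (h : IsSwitchPair A B S) : S.InjOn Prod.snd := by
  obtain ⟨i, j, k, l, -, -, -, -, hjl, -, rfl, -⟩ := h
  exact Set.injOn_pair.2 fun h => absurd h hjl

lemma IsSwitchPair.eq_sdiff (h : IsSwitchPair A B S) : S = A \ B := by
  have hS := h.subset
  obtain ⟨i, j, k, l, -, -, -, -, -, -, -, -, -, hnot, hnot', rfl⟩ := h
  have hdisj : Disjoint S {(i, l), (k, j)} := Set.disjoint_left.2 <| by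
    rintro e he (rfl | rfl)
    exacts [hnot (hS he), hnot' (hS he)]
  rw [← Set.sdiff_sdiff, Set.sdiff_sdiff_cancel_left hS, hdisj.sdiff_eq_left]

lemma IsSwitchPair.target_unique (h : IsSwitchPair A B S) (h' : IsSwitchPair A B' S) : B = B' := by
  obtain ⟨i, j, k, l, -, -, -, -, -, -, rfl, -, -, -, -, rfl⟩ := h
  obtain ⟨i', j', k', l', -, -, -, -, -, -, hpair, -, -, -, -, rfl⟩ := h'
  congr 1
  rcases Set.pair_eq_pair_iff.1 hpair with ⟨h₁, h₂⟩ | ⟨h₁, h₂⟩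
  · obtain ⟨rfl, rfl⟩ := Prod.mk.inj h₁
    obtain ⟨rfl, rfl⟩ := Prod.mk.inj h₂
    rfl
  · obtain ⟨rfl, rfl⟩ := Prod.mk.inj h₁
    obtain ⟨rfl, rfl⟩ := Prod.mk.inj h₂
    exact Set.pair_comm _ _

lemma DSwitch.isSwitchPair_sdiff (h : DSwitch A B) : IsSwitchPair A B (A \ B) := by
  obtain ⟨S, hS⟩ := dSwitch_iff_exists_isSwitchPair.1 h
  exact hS.eq_sdiff ▸ hS

lemma DSwitch.symm (h : DSwitch A B) : DSwitch B A := by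
  have hsdiff := h.isSwitchPair_sdiff
  obtain ⟨i, j, k, l, hij, hik, hil, hjk, hjl, hkl, hS, -, -, hnot, hnot', hB⟩ := hsdiff
  have hdisj : A ∩ {(i, l), (k, j)} ⊆ ∅ := by
    rintro e ⟨he, rfl | rfl⟩
    exacts [hnot he, hnot' he]
  have hmem : ∀ e ∈ ({(i, j), (k, l)} : Set (Fin n × Fin n)), e ∉ B := fun e he =>
    (hS.symm ▸ he : e ∈ A \ B).2
  refine ⟨i, l, k, j, hil, hik, hij, hkl.symm, hjl.symm, hjk.symm, ?_, ?_, hmem _ (.inl rfl),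
    hmem _ (.inr rfl), ?_⟩
  · exact hB ▸ .inr (.inl rfl)
  · exact hB ▸ .inr (.inr rfl)
  · rw [← hS, hB, Set.union_sdiff_cancel_right, ← hB, Set.sdiff_union_of_subset Set.sdiff_subset]
    exact (Set.inter_subset_inter_left _ Set.sdiff_subset).trans hdisj

lemma dSwitch_comm : DSwitch A B ↔ DSwitch B A :=
  ⟨DSwitch.symm, DSwitch.symm⟩

lemma dSwitchCount_eq (A B : Set (Fin n × Fin n)) :
    dSwitchCount A B = if DSwitch A B then 1 else 0 := by
  change {S | IsSwitchPair A B S}.ncard = _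
  split_ifs with h
  · rw [Set.ncard_eq_one]
    exact ⟨A \ B, Set.eq_singleton_iff_unique_mem.2
      ⟨h.isSwitchPair_sdiff, fun S hS => hS.eq_sdiff⟩⟩
  · rw [Set.ncard_eq_zero, Set.eq_empty_iff_forall_notMem]
    exact fun S hS => h (dSwitch_iff_exists_isSwitchPair.2 ⟨S, hS⟩)

lemma arcPairCount_eq_choose (A : Set (Fin n × Fin n)) : arcPairCount A = A.ncard.choose 2 := by
  have hpairs : {S : Set (Fin n × Fin n) | S ⊆ A ∧ S.ncard = 2} =
      (fun s : Finset (Fin n × Fin n) => (s : Set (Fin n × Fin n))) ''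
        (A.toFinset.powersetCard 2 : Finset (Finset (Fin n × Fin n))) := by
    ext S
    simp only [Set.mem_ofPred_eq, Set.mem_image, Finset.mem_coe, Finset.mem_powersetCard,
      Set.subset_toFinset]
    constructor
    · rintro ⟨hS, hcard⟩
      exact ⟨S.toFinset, ⟨by rwa [Set.coe_toFinset], by rw [← hcard, Set.ncard_eq_toFinset_card']⟩,
        Set.coe_toFinset S⟩
    · rintro ⟨s, ⟨hs, hcard⟩, rfl⟩
      exact ⟨hs, by rw [Set.ncard_coe_finset, hcard]⟩
  rw [arcPairCount, hpairs, Set.ncard_image_of_injective _ Finset.coe_injective,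
    Set.ncard_coe_finset, Finset.card_powersetCard, Set.ncard_eq_toFinset_card']

end SwitchPairs

section Chain

open scoped Matrix

variable {dm dp : Fin n → ℕ} {A : Set (Fin n × Fin n)}

lemma exists_isSimple_arcs_eq (hA : A ∈ Omega dm dp) :
    ∃ φ : Points dp ≃ Points dm, IsSimple φ ∧ arcs φ = A := by
  have hpos : 0 < (Finset.univ.filter fun φ : Points dp ≃ Points dm =>
      IsSimple φ ∧ arcs φ = A).card := card_isSimple_arcs_eq hA ▸ numLabellings_pos
  obtain ⟨φ, hφ⟩ := Finset.card_pos.1 hpos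
  exact ⟨φ, (Finset.mem_filter_univ φ).1 hφ⟩

lemma ncard_of_mem_Omega (hA : A ∈ Omega dm dp) : A.ncard = Fintype.card (Points dp) := by
  obtain ⟨φ, hφ, rfl⟩ := exists_isSimple_arcs_eq hA
  rw [arcs, ← Set.image_univ, Set.ncard_image_of_injective _ hφ.2, Set.ncard_univ,
    Nat.card_eq_fintype_card]

lemma exists_pair_same_tail_or_head (hr : 2 ≤ rmax dm dp) (hA : A ∈ Omega dm dp) :
    ∃ e ∈ A, ∃ e' ∈ A, e ≠ e' ∧ (e.1 = e'.1 ∨ e.2 = e'.2) := by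
  obtain ⟨j, -, hj⟩ := (Finset.lt_sup_iff (a := 1)).1 hr
  rcases lt_max_iff.1 hj with hin | hout
  · rw [← hA.2.2 j, Set.one_lt_ncard_iff] at hin
    obtain ⟨u, u', hu, hu', hne⟩ := hin
    exact ⟨_, hu, _, hu', fun h => hne (Prod.mk.inj h).1, .inr rfl⟩
  · rw [← hA.2.1 j, Set.one_lt_ncard_iff] at hout
    obtain ⟨w, w', hw, hw', hne⟩ := hout
    exact ⟨_, hw, _, hw', fun h => hne (Prod.mk.inj h).2, .inl rfl⟩

/-- Two arcs with a common tail or a common head are never switched. -/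
lemma card_dSwitch_lt_arcPairCount (hr : 2 ≤ rmax dm dp) (hA : A ∈ Omega dm dp) :
    (Finset.univ.filter fun B : OmegaType dm dp => DSwitch A B.1).card < arcPairCount A := by
  set F := Finset.univ.filter fun B : OmegaType dm dp => DSwitch A B.1
  have hF {B : OmegaType dm dp} (hB : B ∈ F) : IsSwitchPair A B.1 (A \ B.1) :=
    ((Finset.mem_filter_univ B).1 hB).isSwitchPair_sdiff
  have hinj : Set.InjOn (fun B : OmegaType dm dp => A \ B.1) F := fun B hB B' hB' heq =>
    Subtype.ext <| (hF hB).target_unique <| by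
      simpa only [show A \ B.1 = A \ B'.1 from heq] using hF hB'
  rw [← Set.ncard_coe_finset, ← hinj.ncard_image]
  refine Set.ncard_lt_ncard ?_
  obtain ⟨e, he, e', he', hne, hcommon⟩ := exists_pair_same_tail_or_head hr hA
  refine (Set.ssubset_iff_of_subset ?_).2
    ⟨{e, e'}, ⟨Set.pair_subset_iff.2 ⟨he, he'⟩, Set.ncard_pair hne⟩, ?_⟩
  · rintro _ ⟨B, hB, rfl⟩
    exact ⟨Set.sdiff_subset, (hF hB).ncard_eq_two⟩
  · rintro ⟨B, hB, heq : A \ B.1 = {e, e'}⟩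
    have hpair := heq ▸ hF hB
    rcases hcommon with htail | hhead
    · exact hne (hpair.injOn_fst (.inl rfl) (.inr rfl) htail)
    · exact hne (hpair.injOn_snd (.inl rfl) (.inr rfl) hhead)

lemma arcPairCount_of_mem_Omega (hA : A ∈ Omega dm dp) :
    arcPairCount A = (Fintype.card (Points dp)).choose 2 := by
  rw [arcPairCount_eq_choose, ncard_of_mem_Omega hA]

lemma transP_of_ne {A B : OmegaType dm dp} (h : A ≠ B) :
    transP dm dp A B =
      (if DSwitch A.1 B.1 then 1 else 0) / ((Fintype.card (Points dp)).choose 2 : ℝ) := by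
  rw [transP, if_neg h, dSwitchCount_eq, arcPairCount_of_mem_Omega A.2, Nat.cast_ite, Nat.cast_one,
    Nat.cast_zero]

lemma isSymm_transP : (transP dm dp).IsSymm := by
  refine Matrix.IsSymm.ext fun A B => ?_
  rcases eq_or_ne A B with rfl | h
  · rfl
  · simp only [transP_of_ne h, transP_of_ne h.symm, dSwitch_comm (A := B.1)]

lemma sum_transP (A : OmegaType dm dp) : ∑ B, transP dm dp A B = 1 := by
  set q : OmegaType dm dp → ℝ := fun B => (dSwitchCount A.1 B.1 : ℝ) / arcPairCount A.1 with hq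
  have hdiag : transP dm dp A A = 1 - ∑ B ∈ Finset.univ.erase A, q B := by
    rw [transP, if_pos rfl, ← Finset.filter_ne', Finset.sum_filter]
    simp only [hq, ite_not]
  have hoff : ∑ B ∈ Finset.univ.erase A, transP dm dp A B = ∑ B ∈ Finset.univ.erase A, q B :=
    Finset.sum_congr rfl fun B hB => if_neg (Finset.ne_of_mem_erase hB).symm
  rw [← Finset.add_sum_erase _ _ (Finset.mem_univ A), hdiag, hoff, sub_add_cancel]

lemma choose_card_points_pos (hr : 2 ≤ rmax dm dp) (A : OmegaType dm dp) :
    0 < (Fintype.card (Points dp)).choose 2 :=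
  arcPairCount_of_mem_Omega A.2 ▸ (Nat.zero_le _).trans_lt (card_dSwitch_lt_arcPairCount hr A.2)

lemma one_le_choose_mul_transP_self (hr : 2 ≤ rmax dm dp) (A : OmegaType dm dp) :
    1 ≤ ((Fintype.card (Points dp)).choose 2 : ℝ) * transP dm dp A A := by
  have hC : (0 : ℝ) < (Fintype.card (Points dp)).choose 2 :=
    Nat.cast_pos.2 (choose_card_points_pos hr A)
  have hlt := card_dSwitch_lt_arcPairCount hr A.2
  rw [arcPairCount_of_mem_Omega A.2, ← Nat.succ_le_iff] at hlt
  have hle := (Nat.cast_le (α := ℝ)).2 hlt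
  rw [Nat.cast_succ, Finset.card_filter, Nat.cast_sum] at hle
  have hout : ∑ B ∈ Finset.univ.erase A, transP dm dp A B * (Fintype.card (Points dp)).choose 2 ≤
      ∑ B : OmegaType dm dp, ((if DSwitch A.1 B.1 then 1 else 0 : ℕ) : ℝ) := by
    refine (Finset.sum_le_sum_of_subset_of_nonneg (Finset.erase_subset _ _)
      fun _ _ _ => Nat.cast_nonneg _).trans' (Finset.sum_le_sum fun B hB => ?_)
    rw [transP_of_ne (Finset.ne_of_mem_erase hB).symm, div_mul_cancel₀ _ hC.ne', Nat.cast_ite,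
      Nat.cast_one, Nat.cast_zero]
  have hrow := sum_transP A
  rw [← Finset.add_sum_erase _ _ (Finset.mem_univ A), ← eq_sub_iff_add_eq] at hrow
  rw [hrow, mul_sub, mul_one, Finset.mul_sum]
  simp only [mul_comm _ (transP dm dp _ _)]
  linarith

lemma transP_mem_rowStochastic (hr : 2 ≤ rmax dm dp) :
    transP dm dp ∈ Matrix.rowStochastic ℝ (OmegaType dm dp) := by
  refine Matrix.mem_rowStochastic_iff_sum.2 ⟨fun A B => ?_, sum_transP⟩
  rcases eq_or_ne A B with rfl | h
  · exact (pos_of_mul_pos_right (one_pos.trans_le (one_le_choose_mul_transP_self hr A))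
      (Nat.cast_nonneg _)).le
  · rw [transP_of_ne h]
    split_ifs <;> positivity

lemma sum_switchEnergy (hr : 2 ≤ rmax dm dp) (f : Set (Fin n × Fin n) → ℝ)
    {g : OmegaType dm dp → ℝ} (hfg : ∀ A, f A.1 = g A) :
    ∑ A : OmegaType dm dp, switchEnergy dm dp f A.1 =
      2 * ((Fintype.card (Points dp)).choose 2 : ℝ) * (g ⬝ᵥ g - g ⬝ᵥ transP dm dp *ᵥ g) := by
  have hform := sum_mul_add_sq isSymm_transP (transP_mem_rowStochastic hr) g (s := -1) (by norm_num)
  have hterm (A B : OmegaType dm dp) : (if DSwitch A.1 B.1 then (f A.1 - f B.1) ^ 2 else 0) =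
      ((Fintype.card (Points dp)).choose 2 : ℝ) * (transP dm dp A B * (g A + -1 * g B) ^ 2) := by
    have hC : ((Fintype.card (Points dp)).choose 2 : ℝ) ≠ 0 :=
      Nat.cast_ne_zero.2 (choose_card_points_pos hr A).ne'
    rw [hfg, hfg, neg_one_mul, ← sub_eq_add_neg]
    rcases eq_or_ne A B with rfl | h
    · rw [sub_self, zero_pow two_ne_zero, mul_zero, mul_zero, ite_self]
    · rw [transP_of_ne h, ← mul_assoc, mul_div_cancel₀ _ hC, ite_mul, one_mul, zero_mul]
  simp only [switchEnergy, hterm, ← Finset.mul_sum]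
  rw [hform]
  ring

end Chain

section MixingTime

open scoped Matrix

variable {dm dp : Fin n → ℕ}

lemma sum_sub_sq_of_sum_eq_zero {Ω : Type*} [Fintype Ω] {g : Ω → ℝ} (hg : ∑ x, g x = 0) :
    ∑ x, ∑ y, (g x - g y) ^ 2 = 2 * Fintype.card Ω * (g ⬝ᵥ g) := by
  simp only [sub_sq, mul_assoc, Finset.sum_add_distrib, Finset.sum_sub_distrib, Finset.sum_const,
    Finset.card_univ, nsmul_eq_mul, ← Finset.mul_sum, hg, mul_zero, sub_zero,
    dotProduct, ← pow_two]
  ring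

lemma card_points_eq_numArcs (hne : (Omega dm dp).Nonempty) :
    Fintype.card (Points dp) = numArcs dm := by
  obtain ⟨A, hA⟩ := hne
  obtain ⟨φ, -⟩ := exists_isSimple_arcs_eq hA
  rw [Fintype.card_congr φ, Fintype.card_sigma, numArcs]
  simp only [Fintype.card_fin]

lemma IsSparse.dotProduct_self_le (hd : IsSparse dm dp) {g : OmegaType dm dp → ℝ}
    (hg : ∑ A, g A = 0) :
    g ⬝ᵥ g ≤ 27 * (n ^ 2 + 1) * (Fintype.card (Points dp) : ℝ) ^ 7 *
      ((Fintype.card (Points dp)).choose 2 : ℝ) * (g ⬝ᵥ g - g ⬝ᵥ transP dm dp *ᵥ g) := by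
  rcases isEmpty_or_nonempty (OmegaType dm dp) with hΩ | hΩ
  · simp only [dotProduct, Finset.univ_eq_empty, Finset.sum_empty, sub_self, mul_zero, le_refl]
  set f : Set (Fin n × Fin n) → ℝ := Function.extend Subtype.val g 0
  have hfg (A : OmegaType dm dp) : f A.1 = g A := Subtype.val_injective.extend_apply g 0 A
  have hpoincare := hd.switch_poincare f
  rw [sum_switchEnergy hd.two_le f hfg] at hpoincare
  simp only [hfg] at hpoincare
  rw [sum_sub_sq_of_sum_eq_zero hg] at hpoincare
  have hcard : (0 : ℝ) < 2 * Fintype.card (OmegaType dm dp) := by positivity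
  refine le_of_mul_le_mul_left (hpoincare.trans_eq ?_) hcard
  ring

lemma log_card_omegaType_le (hne : (Omega dm dp).Nonempty) :
    Real.log (Fintype.card (OmegaType dm dp)) ≤ numArcs dm * Real.log (numArcs dm) := by
  have hpos : 0 < Fintype.card (OmegaType dm dp) := Fintype.card_pos_iff.2 hne.to_subtype
  rw [← Real.log_pow, ← Nat.cast_pow]
  refine Real.log_le_log (Nat.cast_pos.2 hpos) (Nat.cast_le.2 ?_)
  rw [← card_points_eq_numArcs hne]
  exact (card_omegaType_le_factorial dm dp).trans (Nat.factorial_le_pow _)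

lemma le_numArcs (h : ∀ j, 1 ≤ dm j) : n ≤ numArcs dm := by
  simpa [numArcs] using Finset.sum_le_sum fun j (_ : j ∈ Finset.univ) => h j

lemma sixteen_mul_sq_le_of_le_sqrt {r m : ℕ} (h : (r : ℝ) ≤ 1 / 4 * √m) : 16 * r ^ 2 ≤ m := by
  have hsq : (4 * r : ℝ) ^ 2 ≤ √m ^ 2 := by
    gcongr
    linarith
  rw [Real.sq_sqrt (Nat.cast_nonneg m), mul_pow] at hsq
  norm_num at hsq
  exact_mod_cast hsq

lemma poincareConstant_le {n m r : ℕ} (hnm : n ≤ m) (hr : 2 ≤ r) :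
    27 * (n ^ 2 + 1) * (m : ℝ) ^ 7 * (m.choose 2 : ℝ) ≤ 1 / 4 * (r : ℝ) ^ 16 * (m : ℝ) ^ 11 := by
  rcases m.eq_zero_or_pos with rfl | hm
  · simp
  have hm1 : (1 : ℝ) ≤ m := Nat.one_le_cast.2 hm
  have hn : (n : ℝ) ^ 2 + 1 ≤ 2 * (m : ℝ) ^ 2 := by
    have : (n : ℝ) ^ 2 ≤ (m : ℝ) ^ 2 := by gcongr
    nlinarith
  have hchoose : (m.choose 2 : ℝ) ≤ (m : ℝ) ^ 2 / 2 := by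
    rw [Nat.cast_choose_two]
    nlinarith
  have hpow : (2 : ℝ) ^ 16 ≤ (r : ℝ) ^ 16 := by
    gcongr
    exact_mod_cast hr
  calc 27 * (n ^ 2 + 1) * (m : ℝ) ^ 7 * (m.choose 2 : ℝ)
      ≤ 27 * (2 * (m : ℝ) ^ 2) * (m : ℝ) ^ 7 * ((m : ℝ) ^ 2 / 2) := by gcongr
    _ = 27 * (m : ℝ) ^ 11 := by ring
    _ ≤ 1 / 4 * (r : ℝ) ^ 16 * (m : ℝ) ^ 11 := by
      gcongr
      linarith

theorem main_directed_general (dm dp : Fin n → ℕ) (hdigraphical : (Omega dm dp).Nonempty)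
    (hrmax : 2 ≤ rmax dm dp) (hsparse : 16 * rmax dm dp ^ 2 ≤ numArcs dm)
    {ε : ℝ} (hε₀ : 0 < ε) (hε₁ : ε ≤ 1) :
    (mixingTime (transP dm dp) (uniformDist dm dp) ε : ℝ) ≤
      27 * (n ^ 2 + 1) * (numArcs dm : ℝ) ^ 7 * ((numArcs dm).choose 2 : ℝ) *
        (numArcs dm * Real.log (numArcs dm) / 2 + Real.log ε⁻¹) := by
  have hcard := card_points_eq_numArcs hdigraphical
  have hd : IsSparse dm dp := ⟨hrmax, hcard ▸ hsparse⟩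
  set m := numArcs dm
  have hm : 1 ≤ m := by nlinarith
  have hchoose : (1 : ℝ) ≤ m.choose 2 := by
    obtain ⟨A, hA⟩ := hdigraphical
    exact_mod_cast hcard ▸ choose_card_points_pos hrmax ⟨A, hA⟩
  have hfactor : 2 ≤ 27 * (n ^ 2 + 1) * (m : ℝ) ^ 7 := by
    have hpow : (1 : ℝ) ≤ (m : ℝ) ^ 7 := one_le_pow₀ (mod_cast hm)
    nlinarith [sq_nonneg (n : ℝ)]
  refine (mixingTime_uniform_le isSymm_transP (transP_mem_rowStochastic hrmax) ?_ (fun A => ?_)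
    (fun g hg => hcard ▸ hd.dotProduct_self_le hg) hε₀ hε₁).trans ?_
  · nlinarith
  · have hdiag := hcard ▸ one_le_choose_mul_transP_self hrmax A
    nlinarith
  · have hlog := log_card_omegaType_le hdigraphical
    gcongr

end MixingTime

/-- Theorem 2: mixing time of the directed switch chain. -/
theorem main_directed
    (dm dp : Fin n → ℕ)
    (hsum : ∑ j, dm j = ∑ j, dp j)
    (hdigraphical : (Omega dm dp).Nonempty)
    (hirr : SwitchIrreducible dm dp)
    (hrmin : ∀ j, 1 ≤ dm j ∧ 1 ≤ dp j)
    (hrmax2 : 2 ≤ rmax dm dp)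
    (hrmaxm : (rmax dm dp : ℝ) ≤ (1 / 4) * Real.sqrt (numArcs dm))
    (ε : ℝ) (hε0 : 0 < ε) (hε1 : ε < 1) :
    (mixingTime (transP dm dp) (uniformDist dm dp) ε : ℝ) ≤
      (1 / 4) * (rmax dm dp : ℝ) ^ 16 * (numArcs dm : ℝ) ^ 11 *
        ((numArcs dm : ℝ) * Real.log (numArcs dm) + Real.log ε⁻¹) := by
  have hlog : 0 ≤ numArcs dm * Real.log (numArcs dm) :=
    mul_nonneg (Nat.cast_nonneg _) (Real.log_natCast_nonneg _)
  have hlogε : 0 ≤ Real.log ε⁻¹ := Real.log_nonneg ((one_le_inv₀ hε0).2 hε1.le)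
  refine (main_directed_general dm dp hdigraphical hrmax2 (sixteen_mul_sq_le_of_le_sqrt hrmaxm)
    hε0 hε1.le).trans ?_
  gcongr ?_ * (?_ + _)
  · exact poincareConstant_le (le_numArcs fun j => (hrmin j).1) hrmax2
  · exact half_le_self hlog

end DirectedSwitchChain
end
end

section
/- Let L be an encoding for the degree sequence d with exactly p 2-defect edges and exactly q (−1)-defect edges, and let a_1, b_1 ∈ [n] be distinct vertices with L(a_1, b_1) ≠ 0. Then the number of ordered pairs of vertices (a_2, b_2) such that L(a_2, b_2) = 1, L(a_2, b_1) = 0 and a_1, b_1, a_2, b_2 are all distinct is at least M − 4p + 2q − ( d_max·( d_max − ζ_{b_1} + 2·η_{b_1} + 2 ) + η_{a_1} + η_{b_1} − 2·(ζ_{a_1} + ζ_{b_1}) + Σ_{y ∈ N̂_L(b_1)} (η_y − 2·ζ_y) ). -/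
/-!
Write `o_v` for the number of edges labelled `1` at `v`. The row sums give
`o_v = d_v - 2 ζ_v + η_v`, so by the handshake lemma `M - 4p + 2q` ordered pairs `(a₂, b₂)` have
`L(a₂, b₂) = 1`. Such a pair is admissible precisely when `a₂` avoids `S = N̂(b₁) ∪ {b₁}` and `b₂`
avoids `T = {a₁}`: since `a₁ ∈ N̂(b₁)`, this already forces `a₂ ≠ a₁`, and `b₂ = b₁` would put `a₂`
into `N̂(b₁)`. Hence at most `∑_{v ∈ S} o_v + ∑_{v ∈ T} o_v` pairs are lost, where
`o_v ≤ d_max + η_v - 2 ζ_v` and `|N̂(b₁)| = d_{b₁} - ζ_{b₁} + 2 η_{b₁}`.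
-/

open scoped Classical

noncomputable section

namespace SwitchChain

variable {n : ℕ}

/-- `M d` is the sum of the degrees. -/
def M (d : Fin n → ℕ) : ℕ := ∑ j, d j

/-- The maximum degree. -/
def dmax (d : Fin n → ℕ) : ℕ := Finset.univ.sup d

/-- An encoding for the degree sequence `d`: a symmetric integer matrix with zero
diagonal, entries in `{-1, 0, 1, 2}`, and row sums `d`. -/
def IsEncoding (d : Fin n → ℕ) (L : Matrix (Fin n) (Fin n) ℤ) : Prop :=
  (∀ i j, L i j = L j i) ∧ (∀ i, L i i = 0) ∧
  (∀ i j, L i j = -1 ∨ L i j = 0 ∨ L i j = 1 ∨ L i j = 2) ∧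
  (∀ i, ∑ j, L i j = (d i : ℤ))

/-- The set of (unordered) edges of `L` carrying the label `c`. -/
def labelEdges (L : Matrix (Fin n) (Fin n) ℤ) (c : ℤ) : Set (Sym2 (Fin n)) :=
  {e | ∃ x y : Fin n, e = s(x, y) ∧ x ≠ y ∧ L x y = c}

/-- `N̂_L(v)`: all neighbours of `v` (along edges with nonzero label). -/
def nbrHat (L : Matrix (Fin n) (Fin n) ℤ) (v : Fin n) : Set (Fin n) :=
  {w | w ≠ v ∧ L v w ≠ 0}

/-- `ζ_v`: the number of 2-defect edges incident with `v`. -/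
def zeta (L : Matrix (Fin n) (Fin n) ℤ) (v : Fin n) : ℕ :=
  {w | w ≠ v ∧ L v w = 2}.ncard

/-- `η_v`: the number of (−1)-defect edges incident with `v`. -/
def eta (L : Matrix (Fin n) (Fin n) ℤ) (v : Fin n) : ℕ :=
  {w | w ≠ v ∧ L v w = -1}.ncard

open scoped Finset

section DirectedEdges

variable {V : Type*} [Fintype V] (G : SimpleGraph V) [DecidableRel G.Adj]

lemma card_adj_fst_mem (S : Finset V) :
    #{ab : V × V | G.Adj ab.1 ab.2 ∧ ab.1 ∈ S} = ∑ v ∈ S, G.degree v := by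
  simp_rw [← G.card_neighborFinset_eq_degree, ← Finset.card_sigma]
  exact Finset.card_equiv (Equiv.sigmaEquivProd V V).symm (by simp [and_comm])

lemma card_adj_snd_mem (T : Finset V) :
    #{ab : V × V | G.Adj ab.1 ab.2 ∧ ab.2 ∈ T} = ∑ v ∈ T, G.degree v := by
  rw [← card_adj_fst_mem]
  exact Finset.card_equiv (Equiv.prodComm V V) (by simp [G.adj_comm])

lemma sum_degree_le_ncard_adj_notMem_add (S T : Finset V) :
    ∑ v, G.degree v ≤ {ab : V × V | G.Adj ab.1 ab.2 ∧ ab.1 ∉ S ∧ ab.2 ∉ T}.ncard +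
      ∑ v ∈ S, G.degree v + ∑ v ∈ T, G.degree v := by
  rw [← Finset.coe_filter_univ, Set.ncard_coe_finset, ← card_adj_fst_mem G .univ,
    ← card_adj_fst_mem G S, ← card_adj_snd_mem]
  refine (Finset.card_le_card fun ab => ?_).trans
    ((Finset.card_union_le _ _).trans (Nat.add_le_add_right (Finset.card_union_le _ _) _))
  simp only [Finset.mem_union, Finset.mem_filter, Finset.mem_univ, true_and]
  tauto

end DirectedEdges

/-- The graph formed by the edges of `L` with label `c`. An edge is present as soon as one of its
two entries is `c`; the two entries agree when `L` is symmetric. -/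
def labelGraph {V R : Type*} (L : Matrix V V R) (c : R) : SimpleGraph V :=
  SimpleGraph.fromRel fun x y => L x y = c

lemma labelGraph_adj {V R : Type*} {L : Matrix V V R} (hL : L.IsSymm) {c : R} {v w : V} :
    (labelGraph L c).Adj v w ↔ w ≠ v ∧ L v w = c := by
  simp [labelGraph, hL.apply v w, ne_comm]

lemma ncard_setOf_ne_and_eq {V R : Type*} [Fintype V] {L : Matrix V V R} (hL : L.IsSymm) (c : R)
    (v : V) : {w | w ≠ v ∧ L v w = c}.ncard = (labelGraph L c).degree v := by
  simp only [← labelGraph_adj hL]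
  rw [← SimpleGraph.card_neighborFinset_eq_degree, ← Set.ncard_coe_finset,
    SimpleGraph.coe_neighborFinset]
  rfl

lemma edgeSet_labelGraph (L : Matrix (Fin n) (Fin n) ℤ) (c : ℤ) :
    (labelGraph L c).edgeSet = labelEdges L c := by
  ext ⟨x, y⟩
  simp only [labelGraph, labelEdges, Set.mem_ofPred_eq, Sym2.eq_iff, SimpleGraph.mem_edgeSet,
    SimpleGraph.fromRel_adj]
  grind

lemma sum_degree_labelGraph (L : Matrix (Fin n) (Fin n) ℤ) (c : ℤ) :
    ∑ v, (labelGraph L c).degree v = 2 * (labelEdges L c).ncard := by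
  rw [SimpleGraph.sum_degrees_eq_twice_card_edges, ← edgeSet_labelGraph,
    ← SimpleGraph.coe_edgeFinset, Set.ncard_coe_finset]

lemma zeta_eq_degree {L : Matrix (Fin n) (Fin n) ℤ} (hL : L.IsSymm) (v : Fin n) :
    zeta L v = (labelGraph L 2).degree v :=
  ncard_setOf_ne_and_eq hL 2 v

lemma eta_eq_degree {L : Matrix (Fin n) (Fin n) ℤ} (hL : L.IsSymm) (v : Fin n) :
    eta L v = (labelGraph L (-1)).degree v :=
  ncard_setOf_ne_and_eq hL (-1) v

lemma notMem_nbrHat_self (L : Matrix (Fin n) (Fin n) ℤ) (v : Fin n) : v ∉ nbrHat L v :=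
  fun h => h.1 rfl

lemma le_dmax (d : Fin n → ℕ) (v : Fin n) : d v ≤ dmax d :=
  Finset.le_sup (Finset.mem_univ v)

namespace IsEncoding

variable {d : Fin n → ℕ} {L : Matrix (Fin n) (Fin n) ℤ}

lemma isSymm (hL : IsEncoding d L) : L.IsSymm :=
  Matrix.IsSymm.ext fun i j => hL.1 j i

lemma apply_self (hL : IsEncoding d L) (v : Fin n) : L v v = 0 :=
  hL.2.1 v

lemma apply_eq_or (hL : IsEncoding d L) (v w : Fin n) :
    L v w = -1 ∨ L v w = 0 ∨ L v w = 1 ∨ L v w = 2 :=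
  hL.2.2.1 v w

lemma sum_row (hL : IsEncoding d L) (v : Fin n) : ∑ w, L v w = d v :=
  hL.2.2.2 v

lemma ne_of_apply_ne_zero (hL : IsEncoding d L) {v w : Fin n} (h : L v w ≠ 0) : w ≠ v := by
  rintro rfl
  exact h (hL.apply_self w)

lemma labelGraph_adj_iff (hL : IsEncoding d L) {c : ℤ} (hc : c ≠ 0) {v w : Fin n} :
    (labelGraph L c).Adj v w ↔ L v w = c := by
  rw [labelGraph_adj hL.isSymm, and_iff_right_iff_imp]
  rintro rfl
  exact hL.ne_of_apply_ne_zero hc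

lemma mem_nbrHat_iff (hL : IsEncoding d L) {v w : Fin n} : w ∈ nbrHat L v ↔ L v w ≠ 0 :=
  and_iff_right_of_imp hL.ne_of_apply_ne_zero

lemma card_filter_apply_eq (hL : IsEncoding d L) {c : ℤ} (hc : c ≠ 0) (v : Fin n) :
    #{w | L v w = c} = (labelGraph L c).degree v := by
  simp only [← hL.labelGraph_adj_iff hc, ← SimpleGraph.card_neighborFinset_eq_degree,
    SimpleGraph.neighborFinset_eq_filter]

lemma sum_comp_row {A : Type*} [AddCommMonoid A] (hL : IsEncoding d L) {f : ℤ → A}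
    (hf : f 0 = 0) (v : Fin n) :
    ∑ w, f (L v w) =
      (labelGraph L 1).degree v • f 1 + zeta L v • f 2 + eta L v • f (-1) := by
  rw [zeta_eq_degree hL.isSymm, eta_eq_degree hL.isSymm, ← hL.card_filter_apply_eq one_ne_zero,
    ← hL.card_filter_apply_eq two_ne_zero, ← hL.card_filter_apply_eq (by decide)]
  simp only [← Finset.sum_const, Finset.sum_filter, ← Finset.sum_add_distrib]
  refine Finset.sum_congr rfl fun w _ => ?_
  rcases hL.apply_eq_or v w with h | h | h | h <;> simp [h, hf]

lemma degree_labelGraph_one (hL : IsEncoding d L) (v : Fin n) :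
    ((labelGraph L 1).degree v : ℤ) = d v - 2 * zeta L v + eta L v := by
  have hrow := hL.sum_comp_row (f := id) rfl v
  simp only [id, hL.sum_row v, nsmul_eq_mul] at hrow
  linarith

lemma card_nbrHat (hL : IsEncoding d L) (v : Fin n) :
    (#{y | y ∈ nbrHat L v} : ℤ) = d v - zeta L v + 2 * eta L v := by
  have hcard := hL.sum_comp_row (f := fun x => if x ≠ 0 then (1 : ℤ) else 0) (by simp) v
  simp only [← hL.mem_nbrHat_iff, Finset.sum_boole] at hcard
  calc (#{y | y ∈ nbrHat L v} : ℤ)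
      = (labelGraph L 1).degree v + zeta L v + eta L v := by simpa using hcard
    _ = d v - zeta L v + 2 * eta L v := by rw [hL.degree_labelGraph_one]; ring

lemma sum_degree_labelGraph_one (hL : IsEncoding d L) :
    ∑ v, ((labelGraph L 1).degree v : ℤ) =
      M d - 4 * (labelEdges L 2).ncard + 2 * (labelEdges L (-1)).ncard := by
  have hζ : ∑ v, (zeta L v : ℤ) = 2 * (labelEdges L 2).ncard := by
    simp_rw [zeta_eq_degree hL.isSymm]
    exact_mod_cast sum_degree_labelGraph L 2
  have hη : ∑ v, (eta L v : ℤ) = 2 * (labelEdges L (-1)).ncard := by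
    simp_rw [eta_eq_degree hL.isSymm]
    exact_mod_cast sum_degree_labelGraph L (-1)
  simp only [hL.degree_labelGraph_one, Finset.sum_add_distrib, Finset.sum_sub_distrib,
    ← Finset.mul_sum, hζ, hη, M, Nat.cast_sum]
  ring

lemma sum_degree_labelGraph_one_le (hL : IsEncoding d L) (S : Finset (Fin n)) :
    ∑ v ∈ S, ((labelGraph L 1).degree v : ℤ) ≤
      dmax d * #S + ∑ v ∈ S, ((eta L v : ℤ) - 2 * zeta L v) := by
  have hdeg (v : Fin n) :
      ((labelGraph L 1).degree v : ℤ) ≤ dmax d + ((eta L v : ℤ) - 2 * zeta L v) := by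
    have hdv : (d v : ℤ) ≤ dmax d := mod_cast le_dmax d v
    linarith [hL.degree_labelGraph_one v]
  calc ∑ v ∈ S, ((labelGraph L 1).degree v : ℤ)
      ≤ ∑ v ∈ S, ((dmax d : ℤ) + ((eta L v : ℤ) - 2 * zeta L v)) :=
        Finset.sum_le_sum fun v _ => hdeg v
    _ = dmax d * #S + ∑ v ∈ S, ((eta L v : ℤ) - 2 * zeta L v) := by
        rw [Finset.sum_add_distrib, Finset.sum_const, nsmul_eq_mul, mul_comm]

lemma setOf_second_edge_eq (hL : IsEncoding d L) {a1 b1 : Fin n} (hL1 : L a1 b1 ≠ 0) :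
    {ab : Fin n × Fin n |
        L ab.1 ab.2 = 1 ∧ L ab.1 b1 = 0 ∧
        ab.1 ≠ a1 ∧ ab.1 ≠ b1 ∧ ab.2 ≠ a1 ∧ ab.2 ≠ b1 ∧ ab.1 ≠ ab.2} =
      {ab | (labelGraph L 1).Adj ab.1 ab.2 ∧
        ab.1 ∉ insert b1 ({y | y ∈ nbrHat L b1} : Finset (Fin n)) ∧
        ab.2 ∉ ({a1} : Finset (Fin n))} := by
  ext ⟨a, b⟩
  simp only [Set.mem_ofPred_eq, Finset.mem_insert, Finset.mem_filter, Finset.mem_univ, true_and,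
    Finset.mem_singleton, not_or, hL.mem_nbrHat_iff, not_not, hL.isSymm.apply a b1,
    hL.labelGraph_adj_iff one_ne_zero]
  constructor
  · rintro ⟨hab, hab1, -, ha, hb, -, -⟩
    exact ⟨hab, ⟨ha, hab1⟩, hb⟩
  · rintro ⟨hab, ⟨ha, hab1⟩, hb⟩
    have ha1 : a ≠ a1 := by
      rintro rfl
      exact hL1 hab1
    have hb1 : b ≠ b1 := by
      rintro rfl
      exact one_ne_zero (hab.symm.trans hab1)
    have hne : b ≠ a := hL.ne_of_apply_ne_zero (hab ▸ one_ne_zero)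
    exact ⟨hab, hab1, ha1, ha, hb, hb1, hne.symm⟩

end IsEncoding

/-- Lower bound on the number of ordered pairs `(a₂, b₂)` with `L(a₂,b₂) = 1`,
`L(a₂,b₁) = 0` and `a₁, b₁, a₂, b₂` all distinct. -/
theorem choose_second_edge_lower_bound
    (d : Fin n → ℕ) (L : Matrix (Fin n) (Fin n) ℤ) (hL : IsEncoding d L)
    (p q : ℕ)
    (hp : (labelEdges L 2).ncard = p)
    (hq : (labelEdges L (-1)).ncard = q)
    (a1 b1 : Fin n) (hne : a1 ≠ b1) (hL1 : L a1 b1 ≠ 0) :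
    (M d : ℤ) - 4 * p + 2 * q -
        ((dmax d : ℤ) * ((dmax d : ℤ) - zeta L b1 + 2 * eta L b1 + 2)
          + eta L a1 + eta L b1 - 2 * ((zeta L a1 : ℤ) + zeta L b1)
          + ∑ y ∈ Finset.univ.filter (· ∈ nbrHat L b1),
              ((eta L y : ℤ) - 2 * zeta L y)) ≤
      ({ab : Fin n × Fin n |
          L ab.1 ab.2 = 1 ∧ L ab.1 b1 = 0 ∧
          ab.1 ≠ a1 ∧ ab.1 ≠ b1 ∧ ab.2 ≠ a1 ∧ ab.2 ≠ b1 ∧ ab.1 ≠ ab.2}.ncard : ℤ) := by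
  rw [hL.setOf_second_edge_eq hL1]
  set N : Finset (Fin n) := {y | y ∈ nbrHat L b1}
  have hb1 : b1 ∉ N := by simp [N, notMem_nbrHat_self]
  have hcount := sum_degree_le_ncard_adj_notMem_add (labelGraph L 1) (insert b1 N) {a1}
  have hS := hL.sum_degree_labelGraph_one_le (insert b1 N)
  have hT := hL.sum_degree_labelGraph_one_le {a1}
  have hN : (dmax d : ℤ) * #N ≤ dmax d * (dmax d - zeta L b1 + 2 * eta L b1) := by
    have hd : (d b1 : ℤ) ≤ dmax d := mod_cast le_dmax d b1
    rw [hL.card_nbrHat b1]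
    gcongr
  zify at hcount
  rw [hL.sum_degree_labelGraph_one, hp, hq] at hcount
  simp only [Finset.sum_insert hb1, Finset.card_insert_of_notMem hb1, Finset.sum_singleton,
    Finset.card_singleton, Nat.cast_add, Nat.cast_one] at hcount hS hT
  linarith

end SwitchChain
end
end
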